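/- arXiv:2106.16165 — 6 statements merged into one kernel-verified Lean document; each statement's English description precedes it below -/
import Mathlib

section
/- Basic existence lemma: let a, b be positive integers and c = a + b. The set 𝒯(a,b) is a subgroup of the group of derivations (under pointwise addition), it is saturated (if k·ψ ∈ 𝒯(a,b) for some nonzero integer k and some derivation ψ with ψ(p)=0 for all primes p not dividing abc, then ψ ∈ 𝒯(a,b)), and it has rank ω(abc) − 1: there exist ω(abc) − 1 ℤ-linearly independent elements of 𝒯(a,b), and any ω(abc) elements of 𝒯(a,b) are ℤ-linearly dependent. -/
open Finset

/-- The arithmetic derivative attached to `ψ`: `d^ψ(n) = Σ_{p ∣ n} (n·v_p(n)/p)·ψ(p)`,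
with `d^ψ(0) = 0` (empty sum). Each term is written as `(n/p)·v_p(n)·ψ(p)`, exact since `p ∣ n`. -/
def dpsi (ψ : ℕ → ℤ) (n : ℤ) : ℤ :=
  ∑ p ∈ n.natAbs.primeFactors, (n / (p : ℤ)) * (n.natAbs.factorization p : ℤ) * ψ p

/-- A derivation: a function on primes (zero off primes) with finite norm. -/
def IsDeriv (ψ : ℕ → ℤ) : Prop :=
  (∀ p : ℕ, ¬ p.Prime → ψ p = 0) ∧ ∃ B : ℤ, ∀ p : ℕ, |ψ p| ≤ B

/-- The norm `‖ψ‖ = sup_p |ψ(p)|`. -/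
noncomputable def dNorm (ψ : ℕ → ℤ) : ℝ := ⨆ p : ℕ, (|ψ p| : ℝ)

/-- Membership in `𝒯(a,b)`: a derivation supported on the primes dividing `ab(a+b)`
satisfying `d^ψ(a+b) = d^ψ(a) + d^ψ(b)`. -/
def MemT (a b : ℕ) (ψ : ℕ → ℤ) : Prop :=
  IsDeriv ψ ∧ (∀ p : ℕ, p.Prime → ¬ p ∣ (a * b * (a + b)) → ψ p = 0) ∧
    dpsi ψ ((a : ℤ) + (b : ℤ)) = dpsi ψ (a : ℤ) + dpsi ψ (b : ℤ)

/-- The `ψ`-Wronskian `W^ψ(a,b) = a·d^ψ(b) − b·d^ψ(a)`. -/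
def Wpsi (ψ : ℕ → ℤ) (a b : ℤ) : ℤ := a * dpsi ψ b - b * dpsi ψ a

/-- Membership in `𝒯°(a,b)`: elements of `𝒯(a,b)` for which `a, b` are `ψ`-dependent. -/
def MemT0 (a b : ℕ) (ψ : ℕ → ℤ) : Prop := MemT a b ψ ∧ Wpsi ψ (a : ℤ) (b : ℤ) = 0

/-- The radical of `n`: product of the distinct primes dividing `n`. -/
def radN (n : ℕ) : ℕ := ∏ p ∈ n.primeFactors, p

/-- The Small Derivatives Conjecture with exponent `η`: for all but finitely many triples of
coprime positive integers `(a,b,c)` with `a+b=c`, not of the form `(1,N,q)` with `q` prime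
up to order, there is `ψ ∈ 𝒯(a,b)` with `a,b` `ψ`-independent and `‖ψ‖ < c^η`. -/
def SDC (η : ℝ) : Prop :=
  {t : ℕ × ℕ × ℕ | 0 < t.1 ∧ 0 < t.2.1 ∧ t.1 + t.2.1 = t.2.2 ∧ Nat.Coprime t.1 t.2.1 ∧
    ¬ (∃ N q : ℕ, q.Prime ∧ ({t.1, t.2.1, t.2.2} : Multiset ℕ) = {1, N, q}) ∧
    ¬ ∃ ψ : ℕ → ℤ, MemT t.1 t.2.1 ψ ∧ Wpsi ψ (t.1 : ℤ) (t.2.1 : ℤ) ≠ 0 ∧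
      dNorm ψ < (t.2.2 : ℝ) ^ η}.Finite

/-!
For fixed `a` and `b`, both conditions defining `𝒯(a,b)` are linear in `ψ`: the derivation vanishes
off the prime divisors of `abc`, and it is killed by `ψ ↦ d^ψ(c) - d^ψ(a) - d^ψ(b)`. So `𝒯(a,b)` is
the kernel of a linear functional on a lattice of rank `ω(abc)`, which gives everything once that
functional is nonzero there. Its value at the derivation with `ψ(p) = p` supported at `p` is
`c v_p(c) - a v_p(a) - b v_p(b)`. If this vanished for every `p`, unique factorization would give
`c ^ c = a ^ a * b ^ b`, whereas `a ^ a * b ^ b < c ^ a * c ^ b = c ^ c`.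
-/

theorem exists_linearIndependent_mem_iff_le_finrank {R M : Type*} [Ring R] [StrongRankCondition R]
    [AddCommGroup M] [Module R M] {T : Submodule R M} [Module.Finite R T] {n : ℕ} :
    (∃ v : Fin n → M, (∀ i, v i ∈ T) ∧ LinearIndependent R v) ↔ n ≤ Module.finrank R T := by
  constructor
  · rintro ⟨v, hvT, hv⟩
    have hv' : LinearIndependent R fun i ↦ (⟨v i, hvT i⟩ : T) := .of_comp T.subtype hv
    simpa using hv'.fintype_card_le_finrank
  · intro hn
    obtain ⟨v, hv⟩ := exists_linearIndependent_of_le_finrank hn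
    exact ⟨fun i ↦ v i, fun i ↦ (v i).2, hv.map' T.subtype T.ker_subtype⟩

section Rank

variable {R M : Type*} [CommRing R] [IsDomain R] [AddCommGroup M] [Module R M]

theorem finrank_range_eq_one [Module.Finite R M] {f : Module.Dual R M} (hf : f ≠ 0) :
    Module.finrank R f.range = 1 := by
  refine le_antisymm ?_ (Submodule.one_le_finrank_iff.mpr (mt LinearMap.range_eq_bot.mp hf))
  simpa using f.range.finrank_le

theorem finrank_ker_add_one [Module.Finite R M] {f : Module.Dual R M} (hf : f ≠ 0) :
    Module.finrank R f.ker + 1 = Module.finrank R M := by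
  rw [← f.ker.finrank_quotient_add_finrank, f.quotKerEquivRange.finrank_eq,
    finrank_range_eq_one hf, add_comm]

theorem finrank_inf_ker_add_one {P : Submodule R M} [Module.Finite R P] {f : Module.Dual R M}
    (hf : ∃ x ∈ P, f x ≠ 0) :
    Module.finrank R ↥(P ⊓ f.ker) + 1 = Module.finrank R P := by
  obtain ⟨x, hxP, hx⟩ := hf
  have hfP : f.domRestrict P ≠ 0 := fun h ↦ hx (LinearMap.congr_fun h ⟨x, hxP⟩)
  rw [← finrank_ker_add_one hfP, LinearMap.ker_domRestrict, ← Submodule.map_comap_subtype,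
    Submodule.finrank_map_subtype_eq]

end Rank

section SupportedOn

variable {R ι : Type*}

variable (R) in
/-- The module of functions `ι → R` vanishing off `s`. It is spelled with coordinate projections to
match `LinearMap.iInfKerProjEquiv`; `Finsupp.supported` is the analogue for `ι →₀ R`. -/
def supportedOn [Semiring R] (s : Set ι) : Submodule R (ι → R) :=
  ⨅ i ∈ sᶜ, (LinearMap.proj i : (ι → R) →ₗ[R] R).ker

theorem mem_supportedOn [Semiring R] {s : Set ι} {f : ι → R} :
    f ∈ supportedOn R s ↔ ∀ i ∉ s, f i = 0 := by
  simp [supportedOn]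

theorem single_mem_supportedOn [Semiring R] [DecidableEq ι] {s : Set ι} {i : ι} (hi : i ∈ s)
    (r : R) : Pi.single i r ∈ supportedOn R s :=
  mem_supportedOn.mpr fun _ hj ↦ by simp [(ne_of_mem_of_not_mem hi hj).symm]

variable (R) in
open Classical in
/-- Restriction to `s` identifies the functions vanishing off `s` with the functions on `s`. -/
noncomputable def supportedOnEquiv [Ring R] (s : Set ι) : supportedOn R s ≃ₗ[R] (s → R) :=
  LinearMap.iInfKerProjEquiv R (fun _ ↦ R) disjoint_compl_right (Set.union_compl_self s).ge

instance [Ring R] (s : Finset ι) : Module.Finite R (supportedOn R (s : Set ι)) :=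
  .equiv (supportedOnEquiv R (s : Set ι)).symm

theorem finrank_supportedOn [Ring R] [StrongRankCondition R] (s : Finset ι) :
    Module.finrank R (supportedOn R (s : Set ι)) = #s := by
  simp [(supportedOnEquiv R (s : Set ι)).finrank_eq]

end SupportedOn

theorem pow_self_mul_pow_self_lt {a b : ℕ} (ha : 0 < a) (hb : 0 < b) :
    a ^ a * b ^ b < (a + b) ^ (a + b) := by
  rw [pow_add]
  exact Nat.mul_lt_mul'' (Nat.pow_lt_pow_left (by lia) ha.ne') (Nat.pow_lt_pow_left (by lia) hb.ne')

theorem exists_mul_factorization_add_ne {a b : ℕ} (ha : 0 < a) (hb : 0 < b) :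
    ∃ p, (a + b) * (a + b).factorization p ≠ a * a.factorization p + b * b.factorization p := by
  by_contra! h
  refine (pow_self_mul_pow_self_lt ha hb).ne' (Nat.eq_of_factorization_eq (by positivity)
    (by positivity) fun p ↦ ?_)
  rw [Nat.factorization_mul (by positivity) (by positivity)]
  simpa using h p

/-- The arithmetic derivative of a fixed integer `n`, as a linear functional of the derivation. -/
def dpsiLinearMap (n : ℤ) : Module.Dual ℤ (ℕ → ℤ) where
  toFun ψ := dpsi ψ n
  map_add' ψ φ := by simp [dpsi, mul_add, Finset.sum_add_distrib]
  map_smul' k ψ := by simp [dpsi, Finset.mul_sum, mul_left_comm]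

theorem dpsi_single_self (p : ℕ) (n : ℤ) :
    dpsi (Pi.single p (p : ℤ)) n = n * n.natAbs.factorization p := by
  by_cases hp : p ∈ n.natAbs.primeFactors
  · have hpn : (p : ℤ) ∣ n := Int.natCast_dvd.mpr (Nat.dvd_of_mem_primeFactors hp)
    rw [dpsi, Finset.sum_eq_single_of_mem p hp fun q _ hq ↦ by simp [hq], Pi.single_eq_same,
      mul_right_comm, Int.ediv_mul_cancel hpn]
  · have hfac : n.natAbs.factorization p = 0 := Finsupp.notMem_support_iff.mp hp
    rw [hfac, dpsi, Finset.sum_eq_zero fun q hq ↦ by simp [ne_of_mem_of_not_mem hq hp]]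
    simp

/-- The failure `d^ψ(m + n) - d^ψ(m) - d^ψ(n)` of additivity of `d^ψ` at `m` and `n`, as a linear
functional of `ψ`. -/
def additivityDefect (m n : ℤ) : Module.Dual ℤ (ℕ → ℤ) :=
  dpsiLinearMap (m + n) - dpsiLinearMap m - dpsiLinearMap n

theorem additivityDefect_apply (m n : ℤ) (ψ : ℕ → ℤ) :
    additivityDefect m n ψ = dpsi ψ (m + n) - dpsi ψ m - dpsi ψ n :=
  rfl

theorem additivityDefect_eq_zero_iff {m n : ℤ} {ψ : ℕ → ℤ} :
    additivityDefect m n ψ = 0 ↔ dpsi ψ (m + n) = dpsi ψ m + dpsi ψ n := by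
  rw [additivityDefect_apply, sub_sub, sub_eq_zero]

theorem additivityDefect_single_self (a b p : ℕ) :
    additivityDefect a b (Pi.single p (p : ℤ)) =
      (a + b) * (a + b).factorization p - a * a.factorization p - b * b.factorization p := by
  simp only [additivityDefect_apply, ← Nat.cast_add, dpsi_single_self, Int.natAbs_natCast]

theorem exists_mem_supportedOn_additivityDefect_ne_zero {a b : ℕ} (ha : 0 < a) (hb : 0 < b) :
    ∃ ψ ∈ supportedOn ℤ ((a * b * (a + b)).primeFactors : Set ℕ), additivityDefect a b ψ ≠ 0 := by
  obtain ⟨p, hp⟩ := exists_mul_factorization_add_ne ha hb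
  have hpS : p ∈ (a * b * (a + b)).primeFactors := by
    contrapose! hp
    have hfac : (a * b * (a + b)).factorization p = 0 := Finsupp.notMem_support_iff.mp hp
    rw [Nat.factorization_mul (by positivity) (by positivity),
      Nat.factorization_mul ha.ne' hb.ne'] at hfac
    simp_all
  refine ⟨Pi.single p (p : ℤ), single_mem_supportedOn hpS _, ?_⟩
  rw [additivityDefect_single_self, sub_sub, sub_ne_zero]
  exact_mod_cast hp

theorem isDeriv_and_forall_not_dvd_iff_mem_supportedOn {n : ℕ} (hn : n ≠ 0) {ψ : ℕ → ℤ} :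
    (IsDeriv ψ ∧ ∀ p : ℕ, p.Prime → ¬ p ∣ n → ψ p = 0) ↔
      ψ ∈ supportedOn ℤ (n.primeFactors : Set ℕ) := by
  rw [mem_supportedOn]
  constructor
  · rintro ⟨⟨hprime, -⟩, hdvd⟩ p hp
    by_cases hpp : p.Prime
    · exact hdvd p hpp fun h ↦ hp (Nat.mem_primeFactors.mpr ⟨hpp, h, hn⟩)
    · exact hprime p hpp
  · intro h
    refine ⟨⟨fun p hp ↦ h p (mt Nat.prime_of_mem_primeFactors hp), ∑ p ∈ n.primeFactors, |ψ p|,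
      fun p ↦ ?_⟩, fun p _ hp ↦ h p (mt Nat.dvd_of_mem_primeFactors hp)⟩
    by_cases hp : p ∈ n.primeFactors
    · exact Finset.single_le_sum (f := fun q ↦ |ψ q|) (fun q _ ↦ abs_nonneg _) hp
    · simpa [h p hp] using Finset.sum_nonneg fun q _ ↦ abs_nonneg (ψ q)

/-- The lattice `𝒯(a,b)`, described by linear conditions only: for positive `a` and `b`,
`memT_iff_mem_derivLattice` identifies membership in it with `MemT a b`. -/
def derivLattice (a b : ℕ) : Submodule ℤ (ℕ → ℤ) :=
  supportedOn ℤ ((a * b * (a + b)).primeFactors : Set ℕ) ⊓ (additivityDefect a b).ker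

instance (a b : ℕ) : Module.Finite ℤ (derivLattice a b) :=
  .of_injective _ (Submodule.inclusion_injective inf_le_left)

theorem smul_mem_derivLattice_iff {a b : ℕ} {k : ℤ} (hk : k ≠ 0) {ψ : ℕ → ℤ} :
    k • ψ ∈ derivLattice a b ↔ ψ ∈ derivLattice a b := by
  simp only [derivLattice, Submodule.mem_inf, mem_supportedOn, LinearMap.mem_ker, Pi.smul_apply,
    map_smul, smul_eq_zero_iff_right hk]

theorem memT_iff_mem_derivLattice {a b : ℕ} (ha : 0 < a) (hb : 0 < b) {ψ : ℕ → ℤ} :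
    MemT a b ψ ↔ ψ ∈ derivLattice a b := by
  rw [MemT, ← and_assoc, isDeriv_and_forall_not_dvd_iff_mem_supportedOn (by positivity),
    derivLattice, Submodule.mem_inf, LinearMap.mem_ker, additivityDefect_eq_zero_iff]

theorem finrank_derivLattice_add_one {a b : ℕ} (ha : 0 < a) (hb : 0 < b) :
    Module.finrank ℤ (derivLattice a b) + 1 = #(a * b * (a + b)).primeFactors := by
  rw [derivLattice, finrank_inf_ker_add_one (exists_mem_supportedOn_additivityDefect_ne_zero ha hb),
    finrank_supportedOn]

/-- Basic existence lemma: `𝒯(a,b)` is a saturated subgroup of the derivations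
of rank `ω(ab(a+b)) − 1`. -/
theorem basic_existence_lemma (a b : ℕ) (ha : 0 < a) (hb : 0 < b) :
    (MemT a b 0 ∧
      (∀ ψ φ : ℕ → ℤ, MemT a b ψ → MemT a b φ → MemT a b (ψ + φ)) ∧
      (∀ ψ : ℕ → ℤ, MemT a b ψ → MemT a b (-ψ))) ∧
    (∀ (k : ℤ) (ψ : ℕ → ℤ), k ≠ 0 → IsDeriv ψ →
      (∀ p : ℕ, p.Prime → ¬ p ∣ (a * b * (a + b)) → ψ p = 0) →
      MemT a b (k • ψ) → MemT a b ψ) ∧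
    (∃ ψs : Fin ((a * b * (a + b)).primeFactors.card - 1) → (ℕ → ℤ),
      (∀ i, MemT a b (ψs i)) ∧ LinearIndependent ℤ ψs) ∧
    (∀ ψs : Fin ((a * b * (a + b)).primeFactors.card) → (ℕ → ℤ),
      (∀ i, MemT a b (ψs i)) → ¬ LinearIndependent ℤ ψs) := by
  simp only [memT_iff_mem_derivLattice ha hb]
  have hrank := finrank_derivLattice_add_one ha hb
  refine ⟨⟨zero_mem _, fun _ _ ↦ add_mem, fun _ ↦ neg_mem⟩,
    fun _ _ hk _ _ ↦ (smul_mem_derivLattice_iff hk).mp, ?_, ?_⟩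
  · exact exists_linearIndependent_mem_iff_le_finrank.mpr (by lia)
  · intro ψs hψs hli
    have := exists_linearIndependent_mem_iff_le_finrank.mp ⟨ψs, hψs, hli⟩
    lia
end

section
/- Existence of arithmetic derivatives of controlled size: suppose a, b are coprime positive integers with c := a + b > 2 (i.e. (a,b) ≠ (1,1)). Then r := ω(abc) − 1 ≥ 1 and there exist ℤ-linearly independent derivations ψ₁, …, ψ_r ∈ 𝒯(a,b) satisfying ∏_{i=1}^r ‖ψ_i‖ ≤ (ω(abc)/(2 log 2)) · c · log c. -/
open Finset

/-
Let `L` be a nonzero integral linear form in `m` variables and `Λ` the lattice of its integral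
zeros. Successive minima `x₀, …, x_{m-2}` of `Λ` for the sup norm satisfy `∏ ‖xᵢ‖ ≤ ∑ |L_p|`. To
see this, compare two estimates of the volume modulo `Λ` of a ball `B_r` of radius `r / 2`.

* As long as `r ≤ ‖xₖ‖`, differences of points of `B_r` that lie in `Λ` lie in the span of
  `x₀, …, x_{k-1}`, so that a dilation by `ρ` multiplies the volume modulo `Λ` at least by
  `ρ ^ (m - k)`, the exponent being the codimension of that span. Below the first minimum it is the
  volume `r ^ m` itself. Hence at `r = ‖x_{m-2}‖` it is at least `r * ∏ ‖xᵢ‖`.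
* For an integer `r`, the grid of unit cubes covering `B_r` has, modulo `Λ`, only one cube for each
  value of `L`, so the volume modulo `Λ` is at most `r * ∑ |L_p|`.

Additivity of `d^ψ` at `(a, b)` is such a form in the values `ψ p`, for `p` dividing `a b c`. The
identity `∑ₚ (n vₚ(n) / p) * (p log p) = n log n` and `p log p ≥ 2 log 2` bound its `∑ |L_p|` by
`(c log c + a log a + b log b) / (2 log 2)`, while `a log a + b log b < c log c` shows that the form
is not zero.
-/

section Periodization

open MeasureTheory
open scoped ENNReal

variable {E : Type*} [AddCommGroup E]

/-- The sum of `f` over the translates of a point by the subgroup `Γ`. For `f` the indicator of a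
set `A`, it counts the points of `A` in the `Γ`-orbit of `x`. -/
noncomputable def periodization (Γ : AddSubgroup E) (f : E → ℝ≥0∞) (x : E) : ℝ≥0∞ :=
  ∑' g : Γ, f (x + g)

/-- The weight on `A` that shares out a unit mass equally among the points of `A` in each
`Γ`-orbit. It vanishes off `A`, and also on the orbits that meet `A` infinitely often. -/
noncomputable def orbitWeight (Γ : AddSubgroup E) (A : Set E) (x : E) : ℝ≥0∞ :=
  A.indicator 1 x / periodization Γ (A.indicator 1) x

variable {Γ : AddSubgroup E} {A : Set E}

lemma periodization_add_mem (f : E → ℝ≥0∞) (x : E) {g : E} (hg : g ∈ Γ) :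
    periodization Γ f (x + g) = periodization Γ f x := by
  simpa only [periodization, Equiv.coe_addLeft, AddSubgroup.coe_add, add_assoc] using
    (Equiv.addLeft (⟨g, hg⟩ : Γ)).tsum_eq fun h : Γ => f (x + h)

lemma le_periodization (f : E → ℝ≥0∞) (x : E) {g : E} (hg : g ∈ Γ) :
    f (x + g) ≤ periodization Γ f x :=
  ENNReal.le_tsum (f := fun h : Γ => f (x + h)) ⟨g, hg⟩

lemma periodization_orbitWeight (x : E) :
    periodization Γ (orbitWeight Γ A) x =
      periodization Γ (A.indicator 1) x / periodization Γ (A.indicator 1) x := by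
  have invariant (g : Γ) : periodization Γ (A.indicator 1) (x + g) =
      periodization Γ (A.indicator 1) x := periodization_add_mem _ _ g.2
  simp only [periodization, orbitWeight] at invariant ⊢
  simp only [invariant, div_eq_mul_inv, ENNReal.tsum_mul_right]

lemma periodization_orbitWeight_le_one (x : E) : periodization Γ (orbitWeight Γ A) x ≤ 1 :=
  (periodization_orbitWeight x).trans_le ENNReal.div_self_le_one

lemma periodization_orbitWeight_eq_one {x : E} (hx : x ∈ A)
    (hfin : periodization Γ (A.indicator 1) x ≠ ∞) : periodization Γ (orbitWeight Γ A) x = 1 := by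
  have pos : 1 ≤ periodization Γ (A.indicator 1) x := by
    simpa [hx] using le_periodization (A.indicator 1) x Γ.zero_mem
  rw [periodization_orbitWeight, ENNReal.div_self (one_pos.trans_le pos).ne' hfin]

lemma orbitWeight_of_notMem {x : E} (hx : x ∉ A) : orbitWeight Γ A x = 0 := by
  simp [orbitWeight, hx]

lemma orbitWeight_of_forall_sub_mem {x : E} (hx : x ∈ A)
    (hinj : ∀ y ∈ A, y - x ∈ Γ → y = x) : orbitWeight Γ A x = 1 := by
  have single : periodization Γ (A.indicator 1) x = 1 := by
    rw [periodization, tsum_eq_single 0]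
    · simp [hx]
    · intro g hg
      refine Set.indicator_of_notMem (fun hxg => hg ?_) _
      simpa using hinj _ hxg (by simp)
  simp [orbitWeight, hx, single]

lemma orbitWeight_congr {Γ' : AddSubgroup E}
    (h : ∀ x ∈ A, ∀ y ∈ A, y - x ∈ Γ ↔ y - x ∈ Γ') : orbitWeight Γ A = orbitWeight Γ' A := by
  classical
  ext x
  by_cases hx : x ∈ A
  · have subtype_sum (Δ : AddSubgroup E) : periodization Δ (A.indicator 1) x =
        ∑' g, (Δ : Set E).indicator (fun g => A.indicator 1 (x + g)) g :=
      tsum_subtype (Δ : Set E) fun g => A.indicator 1 (x + g)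
    have same_orbit (g : E) :
        (Γ : Set E).indicator (fun g => A.indicator (1 : E → ℝ≥0∞) (x + g)) g =
          (Γ' : Set E).indicator (fun g => A.indicator 1 (x + g)) g := by
      by_cases hxg : x + g ∈ A
      · have := h x hx _ hxg
        rw [add_sub_cancel_left] at this
        simp only [Set.indicator_apply, SetLike.mem_coe, this]
      · simp [hxg, Set.indicator_apply]
    simp only [orbitWeight, subtype_sum, same_orbit]
  · rw [orbitWeight_of_notMem hx, orbitWeight_of_notMem hx]

lemma periodization_map_subtype {R : Type*} [Ring R] [Module R E] {W : Submodule R E}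
    (Γ : AddSubgroup W) (f : E → ℝ≥0∞) (x : W) (y : E) :
    periodization (Γ.map W.subtype.toAddMonoidHom) f (x + y) =
      periodization Γ (fun w => f (w + y)) x := by
  rw [periodization, periodization,
    ← (Γ.equivMapOfInjective W.subtype.toAddMonoidHom W.injective_subtype).toEquiv.tsum_eq]
  refine tsum_congr fun g => congrArg f ?_
  exact add_right_comm (x : E) y g

variable [MeasurableSpace E] [MeasurableAdd E]

lemma measurable_periodization [Countable Γ] {f : E → ℝ≥0∞} (hf : Measurable f) :
    Measurable (periodization Γ f) :=
  Measurable.tsum fun g : Γ => hf.comp (measurable_add_const (g : E))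

lemma measurable_orbitWeight [Countable Γ] (hA : MeasurableSet A) :
    Measurable (orbitWeight Γ A) :=
  have hA : Measurable (A.indicator (1 : E → ℝ≥0∞)) := measurable_one.indicator hA
  hA.div (measurable_periodization hA)

variable {μ : Measure E} [μ.IsAddRightInvariant]

lemma lintegral_mul_periodization [Countable Γ] {f h : E → ℝ≥0∞} (hf : Measurable f)
    (hh : Measurable h) :
    ∫⁻ x, f x * periodization Γ h x ∂μ = ∫⁻ x, periodization Γ f x * h x ∂μ :=
  calc ∫⁻ x, f x * periodization Γ h x ∂μ
      = ∑' g : Γ, ∫⁻ x, f x * h (x + g) ∂μ := by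
        simp_rw [periodization, ← ENNReal.tsum_mul_left]
        exact lintegral_tsum fun g => by fun_prop
    _ = ∑' g : Γ, ∫⁻ x, f (x + -g) * h x ∂μ := by
        refine tsum_congr fun g => ?_
        simpa only [neg_add_cancel_right] using
          (lintegral_add_right_eq_self (μ := μ) (fun x => f x * h (x + g)) (-g : E)).symm
    _ = ∑' g : Γ, ∫⁻ x, f (x + g) * h x ∂μ :=
        (Equiv.neg Γ).tsum_eq fun g : Γ => ∫⁻ x, f (x + g) * h x ∂μ
    _ = ∫⁻ x, periodization Γ f x * h x ∂μ := by
        simp only [periodization, ← ENNReal.tsum_mul_right]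
        exact (lintegral_tsum fun g => by fun_prop).symm

lemma lintegral_le_of_periodization_le [Countable Γ] {f h : E → ℝ≥0∞} (hf : Measurable f)
    (hh : Measurable h) (hf1 : ∀ x, periodization Γ f x ≤ 1)
    (hh1 : ∀ x, f x ≠ 0 → 1 ≤ periodization Γ h x) : ∫⁻ x, f x ∂μ ≤ ∫⁻ x, h x ∂μ :=
  calc ∫⁻ x, f x ∂μ ≤ ∫⁻ x, f x * periodization Γ h x ∂μ := by
        refine lintegral_mono fun x => ?_
        by_cases hx : f x = 0
        · simp [hx]
        · exact le_mul_of_one_le_right' (hh1 x hx)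
    _ = ∫⁻ x, periodization Γ f x * h x ∂μ := lintegral_mul_periodization hf hh
    _ ≤ ∫⁻ x, h x ∂μ := lintegral_mono fun x => mul_le_of_le_one_left' (hf1 x)

lemma lintegral_orbitWeight_le_measure [Countable Γ] {B : Set E} (hA : MeasurableSet A)
    (hB : MeasurableSet B) (cover : ∀ x ∈ A, ∃ g ∈ Γ, x + g ∈ B) :
    ∫⁻ x, orbitWeight Γ A x ∂μ ≤ μ B := by
  rw [← lintegral_indicator_one hB]
  refine lintegral_le_of_periodization_le (measurable_orbitWeight hA)
    (measurable_one.indicator hB) periodization_orbitWeight_le_one fun x hx => ?_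
  obtain ⟨g, hg, hxg⟩ := cover x (by_contra fun h => hx (orbitWeight_of_notMem h))
  simpa [hxg] using le_periodization (B.indicator 1) x hg

end Periodization

section Dilation

open MeasureTheory Module
open scoped ENNReal NNReal Pointwise

variable {E : Type*} [NormedAddCommGroup E] [NormedSpace ℝ E] [FiniteDimensional ℝ E]
  [MeasurableSpace E] [BorelSpace E]

lemma exists_lintegral_eq_lintegral_lintegral_add {W W' : Submodule ℝ E} (hW : IsCompl W W')
    (μ : Measure E) [μ.IsAddHaarMeasure] (ν : Measure W) [ν.IsAddHaarMeasure]
    (ν' : Measure W') [ν'.IsAddHaarMeasure] :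
    ∃ c : ℝ≥0, ∀ f : E → ℝ≥0∞, Measurable f →
      ∫⁻ x, f x ∂μ = c * ∫⁻ y : W', ∫⁻ x : W, f (x + y) ∂ν ∂ν' := by
  let e : (W × W') ≃L[ℝ] E := (Submodule.prodEquivOfIsCompl W W' hW).toContinuousLinearEquiv
  have haar_map : (Measure.map e (ν.prod ν')).IsAddHaarMeasure := e.isAddHaarMeasure_map _
  obtain ⟨c, hc⟩ : ∃ c : ℝ≥0, μ = c • Measure.map e (ν.prod ν') :=
    ⟨_, Measure.isAddLeftInvariant_eq_smul _ _⟩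
  refine ⟨c, fun f hf => ?_⟩
  rw [hc, lintegral_smul_measure, ENNReal.smul_def, smul_eq_mul,
    lintegral_map hf e.continuous.measurable,
    lintegral_prod_symm (fun z => f (e z)) (hf.comp e.continuous.measurable).aemeasurable]
  rfl

lemma ofReal_pow_mul_lintegral_comp_smul (μ : Measure E) [μ.IsAddHaarMeasure] {f : E → ℝ≥0∞}
    (hf : Measurable f) {ρ : ℝ} (hρ : 0 < ρ) :
    ENNReal.ofReal ρ ^ finrank ℝ E * ∫⁻ x, f (ρ • x) ∂μ = ∫⁻ x, f x ∂μ := by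
  have scaled : ∫⁻ x, f (ρ • x) ∂μ = ENNReal.ofReal (ρ ^ finrank ℝ E)⁻¹ * ∫⁻ x, f x ∂μ := by
    rw [← lintegral_map hf (measurable_const_smul ρ), Measure.map_addHaar_smul μ hρ.ne',
      lintegral_smul_measure, abs_of_pos (by positivity), smul_eq_mul]
  rw [scaled, ← mul_assoc, ← ENNReal.ofReal_pow hρ.le, ← ENNReal.ofReal_mul (by positivity),
    mul_inv_cancel₀ (by positivity), ENNReal.ofReal_one, one_mul]

-- A point `x₀` of the fibre of `A` over `y` translates that fibre by `(ρ - 1) • x₀` into the fibre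
-- of `ρ • A` over `ρ • y`.
lemma lintegral_orbitWeight_add_le {W : Submodule ℝ E} {Γ : AddSubgroup W} [Countable Γ]
    (ν : Measure W) [ν.IsAddRightInvariant] {A : Set E} (hA : Convex ℝ A)
    (hAm : MeasurableSet A) {ρ : ℝ} (hρ : 1 ≤ ρ)
    (hfin : ∀ x, periodization (Γ.map W.subtype.toAddMonoidHom) ((ρ • A).indicator 1) x ≠ ∞)
    (y : E) :
    ∫⁻ x : W, orbitWeight (Γ.map W.subtype.toAddMonoidHom) A (x + y) ∂ν ≤
      ∫⁻ x : W, orbitWeight (Γ.map W.subtype.toAddMonoidHom) (ρ • A) (x + ρ • y) ∂ν := by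
  have hρ0 : ρ ≠ 0 := by positivity
  have : Countable (Γ.map W.subtype.toAddMonoidHom) :=
    (Γ.equivMapOfInjective _ W.injective_subtype).symm.injective.countable
  have measurable_fiber {B : Set E} (hB : MeasurableSet B) (v : E) :
      Measurable fun x : W => orbitWeight (Γ.map W.subtype.toAddMonoidHom) B (x + v) :=
    (measurable_orbitWeight hB).comp (measurable_subtype_coe.add_const v)
  by_cases hne : ∃ x₀ : W, (x₀ : E) + y ∈ A
  · obtain ⟨x₀, hx₀⟩ := hne
    have translate (x : W) (hx : (x : E) + y ∈ A) : (x : E) + ((ρ - 1) • x₀ + ρ • y) ∈ ρ • A := by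
      refine ⟨(1 / ρ) • (x + y) + (1 - 1 / ρ) • (x₀ + y), hA hx hx₀ (by positivity)
        (sub_nonneg.2 ((div_le_one (by positivity)).2 hρ)) (by ring), ?_⟩
      simp only [smul_add, smul_smul, mul_sub, mul_one_div_cancel hρ0]
      module
    calc ∫⁻ x : W, orbitWeight (Γ.map W.subtype.toAddMonoidHom) A (x + y) ∂ν
        ≤ ∫⁻ x : W, orbitWeight (Γ.map W.subtype.toAddMonoidHom) (ρ • A)
            (x + ((ρ - 1) • x₀ + ρ • y)) ∂ν := by
          refine lintegral_le_of_periodization_le (Γ := Γ) (measurable_fiber hAm y)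
            (measurable_fiber (hAm.const_smul₀ ρ) _) (fun x => ?_) fun x hx => ?_
          · rw [← periodization_map_subtype]
            exact periodization_orbitWeight_le_one _
          · have hxA : (x : E) + y ∈ A := by_contra fun h => hx (orbitWeight_of_notMem h)
            rw [← periodization_map_subtype,
              periodization_orbitWeight_eq_one (translate x hxA) (hfin _)]
      _ = ∫⁻ x : W, orbitWeight (Γ.map W.subtype.toAddMonoidHom) (ρ • A) (x + ρ • y) ∂ν := by
          simpa only [Submodule.coe_add, Submodule.coe_smul, add_assoc] using
            lintegral_add_right_eq_self (μ := ν) (fun x : W =>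
              orbitWeight (Γ.map W.subtype.toAddMonoidHom) (ρ • A) (x + ρ • y)) ((ρ - 1) • x₀)
  · push Not at hne
    simp [orbitWeight_of_notMem (hne _)]

lemma lintegral_orbitWeight_smul_ge {W : Submodule ℝ E} {Γ : AddSubgroup W} [Countable Γ]
    (μ : Measure E) [μ.IsAddHaarMeasure] {A : Set E} (hA : Convex ℝ A)
    (hAm : MeasurableSet A) {ρ : ℝ} (hρ : 1 ≤ ρ)
    (hfin : ∀ x, periodization (Γ.map W.subtype.toAddMonoidHom) ((ρ • A).indicator 1) x ≠ ∞) :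
    ENNReal.ofReal ρ ^ (finrank ℝ E - finrank ℝ W) *
        ∫⁻ x, orbitWeight (Γ.map W.subtype.toAddMonoidHom) A x ∂μ ≤
      ∫⁻ x, orbitWeight (Γ.map W.subtype.toAddMonoidHom) (ρ • A) x ∂μ := by
  obtain ⟨W', hW⟩ := W.exists_isCompl
  obtain ⟨c, fubini⟩ := exists_lintegral_eq_lintegral_lintegral_add hW μ
    (Measure.addHaar : Measure W) (Measure.addHaar : Measure W')
  have : Countable (Γ.map W.subtype.toAddMonoidHom) :=
    (Γ.equivMapOfInjective _ W.injective_subtype).symm.injective.countable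
  have hw {B : Set E} (hB : MeasurableSet B) :
      Measurable (orbitWeight (Γ.map W.subtype.toAddMonoidHom) B) := measurable_orbitWeight hB
  have codim : finrank ℝ E - finrank ℝ W = finrank ℝ W' := by
    rw [← Submodule.finrank_add_eq_of_isCompl hW, Nat.add_sub_cancel_left]
  rw [fubini _ (hw hAm), fubini _ (hw (hAm.const_smul₀ ρ)), mul_left_comm, codim,
    ← ofReal_pow_mul_lintegral_comp_smul (Measure.addHaar : Measure W')
      (Measurable.lintegral_prod_left' (f := fun z : W × W' =>
        orbitWeight (Γ.map W.subtype.toAddMonoidHom) (ρ • A) (z.1 + z.2))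
        ((hw (hAm.const_smul₀ ρ)).comp (by fun_prop))) (one_pos.trans_le hρ)]
  gcongr _ * (_ * ?_)
  exact lintegral_mono fun y : W' =>
    lintegral_orbitWeight_add_le Measure.addHaar hA hAm hρ hfin (y : E)

end Dilation

section SuccessiveMinima

open MeasureTheory Module
open scoped ENNReal
open Metric (ball)

variable {E : Type*} [NormedAddCommGroup E] {Λ : AddSubgroup E}

lemma finite_inter_addSubgroup_of_isBounded [ProperSpace E] [DiscreteTopology Λ] {A : Set E}
    (hA : Bornology.IsBounded A) : (A ∩ Λ).Finite :=
  Metric.finite_isBounded_inter_isClosed DiscreteTopology.isDiscrete hA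
    AddSubgroup.isClosed_of_discrete

lemma periodization_indicator_ne_top [ProperSpace E] [DiscreteTopology Λ] {A : Set E}
    (hA : Bornology.IsBounded A) (x : E) : periodization Λ (A.indicator 1) x ≠ ∞ := by
  have finite_orbit : {g : Λ | x + g ∈ A}.Finite := by
    refine ((finite_inter_addSubgroup_of_isBounded (hA.vadd (-x))).preimage
      Subtype.val_injective.injOn).subset fun g hg => ⟨⟨x + g, hg, ?_⟩, g.2⟩
    simp
  rw [periodization, tsum_eq_sum (s := finite_orbit.toFinset) fun g hg => by simpa using hg]
  refine ENNReal.sum_ne_top.2 fun g hg => ?_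
  simp [show x + g ∈ A by simpa using hg]

lemma orbitWeight_ball_eq_indicator {t : ℝ} (h : ∀ z ∈ Λ, z ≠ 0 → t ≤ ‖z‖) :
    orbitWeight Λ (ball 0 (t / 2)) = (ball 0 (t / 2)).indicator 1 := by
  ext x
  by_cases hx : x ∈ ball 0 (t / 2)
  · rw [Set.indicator_of_mem hx]
    refine orbitWeight_of_forall_sub_mem hx fun y hy hyx => by_contra fun hne => ?_
    have := h _ hyx (sub_ne_zero.2 hne)
    rw [mem_ball_zero_iff] at hx hy
    linarith [norm_sub_le y x]
  · rw [orbitWeight_of_notMem hx, Set.indicator_of_notMem hx]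

variable [NormedSpace ℝ E]

open Submodule (span)

/-- The vectors `x 0, …, x (n - 1)` realize the first `n` successive minima of `Λ`: each of them is
a shortest element of `Λ` outside the real span of its predecessors. The sequence is indexed by `ℕ`
for convenience; its values from `n` on are irrelevant. -/
structure IsSuccessiveMinima (Λ : AddSubgroup E) (n : ℕ) (x : ℕ → E) : Prop where
  mem : ∀ k < n, x k ∈ Λ
  notMem_span : ∀ k < n, x k ∉ span ℝ (x '' Set.Iio k)
  norm_le : ∀ k < n, ∀ z ∈ Λ, z ∉ span ℝ (x '' Set.Iio k) → ‖x k‖ ≤ ‖z‖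

lemma exists_norm_le_of_not_subset_span [FiniteDimensional ℝ E] [DiscreteTopology Λ] {s : Set E}
    (hs : ¬ (Λ : Set E) ⊆ span ℝ s) :
    ∃ y ∈ Λ, y ∉ span ℝ s ∧ ∀ z ∈ Λ, z ∉ span ℝ s → ‖y‖ ≤ ‖z‖ := by
  have : ProperSpace E := FiniteDimensional.proper_real E
  obtain ⟨z₀, hz₀, hz₀s⟩ := Set.not_subset.1 hs
  have finite_candidates :
      ((Metric.closedBall 0 ‖z₀‖ ∩ Λ) \ (span ℝ s : Set E)).Finite :=
    (finite_inter_addSubgroup_of_isBounded Metric.isBounded_closedBall).sdiff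
  obtain ⟨y, ⟨⟨-, hy⟩, hys⟩, hmin⟩ := Set.exists_min_image _ norm finite_candidates
    ⟨z₀, ⟨by simp, hz₀⟩, hz₀s⟩
  refine ⟨y, hy, hys, fun z hz hzs => ?_⟩
  rcases le_total ‖z‖ ‖z₀‖ with h | h
  · exact hmin z ⟨⟨by simpa using h, hz⟩, hzs⟩
  · exact (hmin z₀ ⟨⟨by simp, hz₀⟩, hz₀s⟩).trans h

lemma exists_isSuccessiveMinima [FiniteDimensional ℝ E] [DiscreteTopology Λ] {n : ℕ}
    (hn : n ≤ finrank ℝ (span ℝ (Λ : Set E))) : ∃ x, IsSuccessiveMinima Λ n x := by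
  obtain ⟨x, hx⟩ := Set.seq_of_forall_finite_exists (P := fun y s => ¬ (Λ : Set E) ⊆ span ℝ s →
      y ∈ Λ ∧ y ∉ span ℝ s ∧ ∀ z ∈ Λ, z ∉ span ℝ s → ‖y‖ ≤ ‖z‖) fun s _ => by
    by_cases hs : (Λ : Set E) ⊆ span ℝ s
    · exact ⟨0, fun h => absurd hs h⟩
    · obtain ⟨y, hy⟩ := exists_norm_le_of_not_subset_span hs
      exact ⟨y, fun _ => hy⟩
  have not_subset (k : ℕ) (hk : k < n) : ¬ (Λ : Set E) ⊆ span ℝ (x '' Set.Iio k) := fun h => by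
    classical
    have card_bound := finrank_span_finset_le_card (R := ℝ) ((range k).image x)
    rw [coe_image, coe_range] at card_bound
    exact (hn.trans (Submodule.finrank_mono (Submodule.span_le.2 h))).not_gt
      ((card_bound.trans card_image_le).trans_lt (by simpa using hk))
  exact ⟨x, fun k hk => (hx k (not_subset k hk)).1, fun k hk => (hx k (not_subset k hk)).2.1,
    fun k hk => (hx k (not_subset k hk)).2.2⟩

namespace IsSuccessiveMinima

variable {n k : ℕ} {x : ℕ → E}

lemma linearIndepOn (hx : IsSuccessiveMinima Λ n x) (hk : k ≤ n) :
    LinearIndepOn ℝ x (Set.Iio k) := by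
  induction k with
  | zero => simp
  | succ k ih =>
    rw [← Order.succ_eq_add_one, Order.Iio_succ_eq_insert]
    exact (ih (Nat.le_of_succ_le hk)).insert (hx.notMem_span k hk)

lemma finrank_span_image (hx : IsSuccessiveMinima Λ n x) (hk : k ≤ n) :
    finrank ℝ (span ℝ (x '' Set.Iio k)) = k := by
  rw [Set.image_eq_range]
  simpa using finrank_span_eq_card (hx.linearIndepOn hk)

lemma norm_pos (hx : IsSuccessiveMinima Λ n x) (hk : k < n) : 0 < ‖x k‖ :=
  norm_pos_iff.2 fun h => hx.notMem_span k hk (h ▸ zero_mem _)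

lemma norm_le_norm_succ (hx : IsSuccessiveMinima Λ n x) (hk : k + 1 < n) :
    ‖x k‖ ≤ ‖x (k + 1)‖ :=
  hx.norm_le k (Nat.lt_of_succ_lt hk) _ (hx.mem _ hk) fun h => hx.notMem_span _ hk <|
    Submodule.span_mono (Set.image_mono (Set.Iio_subset_Iio k.le_succ)) h

end IsSuccessiveMinima

variable [FiniteDimensional ℝ E] [MeasurableSpace E] [BorelSpace E] (μ : Measure E)
  [μ.IsAddHaarMeasure]

open scoped Pointwise

lemma lintegral_orbitWeight_ball_growth [DiscreteTopology Λ] {W : Submodule ℝ E} {s t : ℝ}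
    (hs : 0 < s) (hst : s ≤ t) (hW : ∀ z ∈ Λ, ‖z‖ < t → z ∈ W) :
    ENNReal.ofReal (t / s) ^ (finrank ℝ E - finrank ℝ W) *
        ∫⁻ x, orbitWeight Λ (ball 0 (s / 2)) x ∂μ ≤
      ∫⁻ x, orbitWeight Λ (ball 0 (t / 2)) x ∂μ := by
  have : ProperSpace E := FiniteDimensional.proper_real E
  have : Countable Λ := TopologicalSpace.separableSpace_iff_countable.1 inferInstance
  let Γ := Λ.comap W.subtype.toAddMonoidHom
  have : Countable Γ := (Set.to_countable (Λ : Set E)).preimage W.injective_subtype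
  have restrict {r : ℝ} (hr : r ≤ t) : orbitWeight Λ (ball 0 (r / 2)) =
      orbitWeight (Γ.map W.subtype.toAddMonoidHom) (ball 0 (r / 2)) := by
    refine orbitWeight_congr fun x hx y hy => ?_
    have short : ‖y - x‖ < t := by
      rw [mem_ball_zero_iff] at hx hy
      linarith [norm_sub_le y x]
    simpa [Γ, AddSubgroup.map_comap_eq] using fun h => hW _ h short
  have ht : 0 < t := hs.trans_le hst
  have dilate : (t / s) • ball (0 : E) (s / 2) = ball 0 (t / 2) := by
    rw [smul_ball (by positivity), smul_zero, Real.norm_of_nonneg (by positivity)]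
    congr 1
    field_simp
  rw [restrict hst, restrict le_rfl, ← dilate]
  refine lintegral_orbitWeight_smul_ge μ (convex_ball _ _) Metric.isOpen_ball.measurableSet
    ((one_le_div hs).2 hst) fun x => ?_
  have : DiscreteTopology (Γ.map W.subtype.toAddMonoidHom) :=
    DiscreteTopology.of_subset ‹_› (AddSubgroup.map_comap_le _ _)
  exact periodization_indicator_ne_top (dilate ▸ Metric.isBounded_ball) x

lemma IsSuccessiveMinima.norm_pow_mul_prod_mul_le [DiscreteTopology Λ] {n k : ℕ} {x : ℕ → E}
    (hx : IsSuccessiveMinima Λ n x) (hk : k < n) :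
    ENNReal.ofReal (‖x k‖ ^ (finrank ℝ E - k) * ∏ i ∈ range k, ‖x i‖) * μ (ball 0 (1 / 2)) ≤
      ∫⁻ y, orbitWeight Λ (ball 0 (‖x k‖ / 2)) y ∂μ := by
  induction k with
  | zero =>
    have first_minimum (z : E) (hz : z ∈ Λ) (hz0 : z ≠ 0) : ‖x 0‖ ≤ ‖z‖ :=
      hx.norm_le 0 hk z hz (by simpa using hz0)
    rw [orbitWeight_ball_eq_indicator first_minimum,
      lintegral_indicator_one Metric.isOpen_ball.measurableSet, div_eq_mul_one_div ‖x 0‖,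
      Measure.addHaar_ball_mul_of_pos μ 0 (hx.norm_pos hk)]
    simp
  | succ k ih =>
    have hk' : k < n := Nat.lt_of_succ_lt hk
    have hW : finrank ℝ (span ℝ (x '' Set.Iio (k + 1))) = k + 1 := hx.finrank_span_image hk.le
    have codim : finrank ℝ E - k = finrank ℝ E - (k + 1) + 1 := by
      have := (span ℝ (x '' Set.Iio (k + 1))).finrank_le
      omega
    have growth := lintegral_orbitWeight_ball_growth μ (W := span ℝ (x '' Set.Iio (k + 1)))
      (hx.norm_pos hk') (hx.norm_le_norm_succ hk) fun z hz hzx =>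
        not_not.1 fun h => (hx.norm_le _ hk z hz h).not_gt hzx
    have pos : 0 < ‖x k‖ := hx.norm_pos hk'
    have exponents :
        ‖x (k + 1)‖ ^ (finrank ℝ E - (k + 1)) * ∏ i ∈ range (k + 1), ‖x i‖ =
          (‖x (k + 1)‖ / ‖x k‖) ^ (finrank ℝ E - (k + 1)) *
            (‖x k‖ ^ (finrank ℝ E - k) * ∏ i ∈ range k, ‖x i‖) := by
      rw [codim, prod_range_succ, div_pow, pow_succ]
      field_simp
    rw [hW] at growth
    rw [exponents, ENNReal.ofReal_mul (by positivity), ENNReal.ofReal_pow (by positivity),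
      mul_assoc]
    exact (mul_le_mul' le_rfl (ih hk')).trans growth

end SuccessiveMinima

section SiegelLemma

open MeasureTheory Module
open scoped Matrix
open Submodule (span)
open Metric (ball)

variable {ι : Type*} [Fintype ι] {L : ι → ℤ}

/-- The integral zeros of the linear form with coefficients `L`, viewed in `ℝ^ι`. -/
def kernelLattice (L : ι → ℤ) : AddSubgroup (ι → ℝ) where
  carrier := {v | ∃ x : ι → ℤ, L ⬝ᵥ x = 0 ∧ (fun p => (x p : ℝ)) = v}
  zero_mem' := ⟨0, by simp, by ext; simp⟩
  add_mem' := by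
    rintro _ _ ⟨x, hx, rfl⟩ ⟨y, hy, rfl⟩
    exact ⟨x + y, by rw [dotProduct_add, hx, hy, add_zero], by ext; simp⟩
  neg_mem' := by
    rintro _ ⟨x, hx, rfl⟩
    exact ⟨-x, by rw [dotProduct_neg, hx, neg_zero], by ext; simp⟩

lemma mem_kernelLattice {v : ι → ℝ} :
    v ∈ kernelLattice L ↔ ∃ x : ι → ℤ, L ⬝ᵥ x = 0 ∧ (fun p => (x p : ℝ)) = v :=
  Iff.rfl

instance : DiscreteTopology (kernelLattice L) := by
  have : DiscreteTopology (span ℤ (Set.range (Pi.basisFun ℝ ι))) := inferInstance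
  refine this.of_subset ?_
  rintro _ ⟨x, -, rfl⟩
  exact (Module.Basis.mem_span_iff_repr_mem ℤ _ _).2 fun p => ⟨x p, by simp⟩

lemma card_le_finrank_span_kernelLattice_add_one (hL : L ≠ 0) :
    Fintype.card ι ≤ finrank ℝ (span ℝ (kernelLattice L : Set (ι → ℝ))) + 1 := by
  classical
  obtain ⟨q, hq⟩ := Function.ne_iff.1 hL
  have relation (p : ι) :
      (fun i => ((Pi.single p (L q) - Pi.single q (L p) : ι → ℤ) i : ℝ)) ∈ kernelLattice L :=
    mem_kernelLattice.2 ⟨_, by simp [dotProduct_sub, mul_comm], rfl⟩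
  have top_le : ⊤ ≤ span ℝ (kernelLattice L : Set (ι → ℝ)) ⊔ span ℝ {Pi.single q 1} := by
    rw [← (Pi.basisFun ℝ ι).span_eq, Submodule.span_le]
    rintro _ ⟨p, rfl⟩
    have hq : (L q : ℝ) ≠ 0 := Int.cast_ne_zero.2 hq
    have expand : Pi.basisFun ℝ ι p =
        (L q : ℝ)⁻¹ • (fun i => ((Pi.single p (L q) - Pi.single q (L p) : ι → ℤ) i : ℝ)) +
          ((L q : ℝ)⁻¹ * L p) • Pi.single q 1 := by
      ext i
      rcases eq_or_ne i p with rfl | hp <;> rcases eq_or_ne i q with rfl | hiq <;>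
        simp_all [Pi.single_apply]
    rw [expand]
    exact add_mem
      (Submodule.smul_mem _ _ (Submodule.mem_sup_left (Submodule.subset_span (relation p))))
      (Submodule.smul_mem _ _ (Submodule.mem_sup_right (Submodule.mem_span_singleton_self _)))
  calc Fintype.card ι = finrank ℝ (⊤ : Submodule ℝ (ι → ℝ)) := by simp
    _ ≤ finrank ℝ ↥(span ℝ (kernelLattice L : Set (ι → ℝ)) ⊔ span ℝ {Pi.single q 1}) :=
        Submodule.finrank_mono top_le
    _ ≤ _ := Submodule.finrank_add_le_finrank_add_finrank _ _
    _ ≤ finrank ℝ (span ℝ (kernelLattice L : Set (ι → ℝ))) + 1 := by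
        gcongr
        exact (finrank_span_singleton (by simp)).le

lemma one_le_sum_natAbs (hL : L ≠ 0) : 1 ≤ ∑ p, (L p).natAbs := by
  obtain ⟨q, hq⟩ := Function.ne_iff.1 hL
  exact (Int.natAbs_pos.2 hq).trans_le
    (single_le_sum (f := fun p => (L p).natAbs) (fun _ _ => Nat.zero_le _) (mem_univ q))

lemma card_image_dotProduct_le [DecidableEq ι] (hL : L ≠ 0) {T : ℕ} (hT : T ≠ 0) :
    #((Fintype.piFinset fun _ : ι => Ico (0 : ℤ) T).image (L ⬝ᵥ ·)) ≤ T * ∑ p, (L p).natAbs := by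
  have : (0 : ℤ) ≤ T - 1 := by omega
  have range_subset : (Fintype.piFinset fun _ : ι => Ico (0 : ℤ) T).image (L ⬝ᵥ ·) ⊆
      Icc (∑ p, -((T - 1) * (L p)⁻)) (∑ p, (T - 1) * (L p)⁺) := by
    refine image_subset_iff.2 fun x hx => mem_Icc.2 ⟨sum_le_sum fun p _ => ?_,
      sum_le_sum fun p _ => ?_⟩
    all_goals
      have hxp := mem_Ico.1 (Fintype.mem_piFinset.1 hx p)
      nlinarith [posPart_nonneg (L p), negPart_nonneg (L p), posPart_sub_negPart (L p)]
  have abs_sum : ((∑ p, (L p).natAbs : ℕ) : ℤ) = ∑ p, (L p)⁺ + ∑ p, (L p)⁻ := by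
    simp [← sum_add_distrib, posPart_add_negPart]
  have one_le := one_le_sum_natAbs hL
  refine (card_le_card range_subset).trans ?_
  rw [Int.card_Icc, sum_neg_distrib, ← mul_sum, ← mul_sum, Int.toNat_le]
  push_cast at abs_sum one_le ⊢
  zify at one_le
  nlinarith

-- The witness `z` is the corner of the cube of `x`: grid points with the same value of `L` differ
-- by an element of the lattice.
lemma exists_forall_exists_add_mem_cube {T : ℕ} {x : ι → ℝ} (hx : x ∈ ball 0 ((T : ℝ) / 2)) :
    ∃ z : ι → ℤ, (∀ p, z p ∈ Ico 0 (T : ℤ)) ∧ ∀ z', L ⬝ᵥ z' = L ⬝ᵥ z → ∃ g ∈ kernelLattice L,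
      x + g ∈ Set.univ.pi fun p => Set.Ico (z' p - (T : ℝ) / 2) (z' p - (T : ℝ) / 2 + 1) := by
  refine ⟨fun p => ⌊x p + T / 2⌋, fun p => ?_, fun z' hz' =>
    ⟨_, mem_kernelLattice.2 ⟨z' - fun p => ⌊x p + T / 2⌋, ?_, rfl⟩, fun p _ => ?_⟩⟩
  · have hxp := abs_lt.1 ((norm_le_pi_norm x p).trans_lt (mem_ball_zero_iff.1 hx))
    rw [mem_Ico, Int.le_floor, Int.floor_lt]
    push_cast
    constructor <;> linarith
  · rw [dotProduct_sub, hz', sub_self]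
  · have := Int.floor_le (x p + T / 2)
    have := Int.lt_floor_add_one (x p + T / 2)
    constructor <;> simp only [Pi.add_apply, Pi.sub_apply] <;> push_cast <;> linarith

-- One cube for each value of `L` on the grid suffices to cover the ball modulo the lattice.
lemma lintegral_orbitWeight_kernelLattice_ball_le (hL : L ≠ 0) {T : ℕ} (hT : T ≠ 0) :
    ∫⁻ x, orbitWeight (kernelLattice L) (ball 0 ((T : ℝ) / 2)) x ≤
      (T * ∑ p, (L p).natAbs : ℕ) := by
  classical
  let cube (z : ι → ℤ) : Set (ι → ℝ) :=
    Set.univ.pi fun p => Set.Ico (z p - (T : ℝ) / 2) (z p - (T : ℝ) / 2 + 1)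
  have volume_cube (z : ι → ℤ) : volume (cube z) = 1 := by simp [cube, volume_pi_pi]
  have measurable_cube (z : ι → ℤ) : MeasurableSet (cube z) :=
    MeasurableSet.univ_pi fun _ => measurableSet_Ico
  let values : Finset ℤ := (Fintype.piFinset fun _ : ι => Ico 0 (T : ℤ)).image (L ⬝ᵥ ·)
  choose! corner _ dot_corner using fun v (hv : v ∈ values) => mem_image.1 hv
  have cover (x : ι → ℝ) (hx : x ∈ ball 0 ((T : ℝ) / 2)) :
      ∃ g ∈ kernelLattice L, x + g ∈ ⋃ v ∈ values, cube (corner v) := by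
    obtain ⟨z, hz, translate⟩ := exists_forall_exists_add_mem_cube (L := L) hx
    have value_mem : L ⬝ᵥ z ∈ values := mem_image_of_mem _ (Fintype.mem_piFinset.2 hz)
    obtain ⟨g, hg, hxg⟩ := translate _ (dot_corner _ value_mem)
    exact ⟨g, hg, Set.mem_biUnion value_mem hxg⟩
  have : Countable (kernelLattice L) :=
    TopologicalSpace.separableSpace_iff_countable.1 inferInstance
  calc ∫⁻ x, orbitWeight (kernelLattice L) (ball 0 ((T : ℝ) / 2)) x
      ≤ volume (⋃ v ∈ values, cube (corner v)) :=
        lintegral_orbitWeight_le_measure Metric.isOpen_ball.measurableSet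
          (values.measurableSet_biUnion fun v _ => measurable_cube (corner v)) cover
    _ ≤ ∑ v ∈ values, volume (cube (corner v)) := measure_biUnion_finset_le _ _
    _ ≤ (T * ∑ p, (L p).natAbs : ℕ) := by
        simpa [volume_cube] using mod_cast card_image_dotProduct_le hL hT

lemma norm_intCast_comp (x : ι → ℤ) : ‖fun p => (x p : ℝ)‖ = ‖x‖ := by
  have nnnorm_cast (m : ℤ) : ‖(m : ℝ)‖₊ = ‖m‖₊ := NNReal.eq (Int.norm_cast_real m)
  simp only [Pi.norm_def, nnnorm_cast]

lemma exists_natCast_eq_pi_norm_int (x : ι → ℤ) : ∃ T : ℕ, (T : ℝ) = ‖x‖ := by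
  refine ⟨univ.sup fun p => (x p).natAbs, ?_⟩
  rw [← NNReal.coe_natCast, Nat.cast_finsetSup]
  simp only [NNReal.natCast_natAbs, Pi.norm_def]

lemma IsSuccessiveMinima.prod_norm_le_sum_natAbs (hL : L ≠ 0) {y : ℕ → ι → ℝ}
    (hy : IsSuccessiveMinima (kernelLattice L) (Fintype.card ι - 1) y) :
    ∏ i ∈ range (Fintype.card ι - 1), ‖y i‖ ≤ (∑ p, (L p).natAbs : ℕ) := by
  rcases hn : Fintype.card ι - 1 with - | m
  · rw [prod_range_zero]
    exact_mod_cast one_le_sum_natAbs hL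
  rw [hn] at hy
  obtain ⟨x, -, hx⟩ := mem_kernelLattice.1 (hy.mem m m.lt_succ_self)
  obtain ⟨T, hT⟩ : ∃ T : ℕ, (T : ℝ) = ‖y m‖ := by
    rw [← hx, norm_intCast_comp]
    exact exists_natCast_eq_pi_norm_int x
  have T_pos : 0 < (T : ℝ) := hT ▸ hy.norm_pos m.lt_succ_self
  have T_ne_zero : T ≠ 0 := by exact_mod_cast T_pos.ne'
  have volume_bound := (hy.norm_pow_mul_prod_mul_le volume m.lt_succ_self).trans
    (hT ▸ lintegral_orbitWeight_kernelLattice_ball_le hL T_ne_zero)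
  have codim : Fintype.card ι - m = 2 := by omega
  have volume_ball : volume (ball (0 : ι → ℝ) (1 / 2)) = 1 := by simp [Real.volume_pi_ball]
  rw [volume_ball, mul_one, finrank_pi, codim, ← hT, ← ENNReal.ofReal_natCast,
    ENNReal.ofReal_le_ofReal_iff (by positivity), Nat.cast_mul] at volume_bound
  refine le_of_mul_le_mul_left ?_ T_pos
  calc (T : ℝ) * ∏ i ∈ range (m + 1), ‖y i‖ = T ^ 2 * ∏ i ∈ range m, ‖y i‖ := by
        rw [prod_range_succ, ← hT]
        ring
    _ ≤ T * (∑ p, (L p).natAbs : ℕ) := volume_bound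

theorem exists_linearIndependent_dotProduct_eq_zero_prod_norm_le (hL : L ≠ 0) :
    ∃ x : Fin (Fintype.card ι - 1) → ι → ℤ, (∀ i, L ⬝ᵥ x i = 0) ∧ LinearIndependent ℤ x ∧
      ∏ i, ‖x i‖ ≤ ∑ p, ‖L p‖ := by
  have rank_bound := card_le_finrank_span_kernelLattice_add_one hL
  obtain ⟨y, hy⟩ := exists_isSuccessiveMinima (Nat.sub_le_iff_le_add.2 rank_bound)
  choose x hx hxy using fun i : Fin (Fintype.card ι - 1) => mem_kernelLattice.1 (hy.mem i i.2)
  refine ⟨x, hx, ?_, ?_⟩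
  · have independent : LinearIndependent ℝ fun i : Fin (Fintype.card ι - 1) => y i :=
      (hy.linearIndepOn le_rfl).comp (fun i : Fin _ => ⟨i, i.2⟩) fun i j h =>
        Fin.ext (congrArg Subtype.val h)
    have cast_eq : (Int.castAddHom ℝ).toIntLinearMap.compLeft ι ∘ x =
        fun i : Fin _ => y i := funext hxy
    refine LinearIndependent.of_comp ((Int.castAddHom ℝ).toIntLinearMap.compLeft ι) ?_
    rw [cast_eq]
    exact independent.restrict_scalars' ℤ
  · calc ∏ i, ‖x i‖ = ∏ i ∈ range (Fintype.card ι - 1), ‖y i‖ := by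
          rw [← Fin.prod_univ_eq_prod_range fun i => ‖y i‖]
          exact prod_congr rfl fun i _ => by rw [← hxy, norm_intCast_comp]
      _ ≤ (∑ p, (L p).natAbs : ℕ) := hy.prod_norm_le_sum_natAbs hL
      _ = ∑ p, ‖L p‖ := by simp [Int.norm_eq_abs]

end SiegelLemma

section ArithmeticDerivative

open scoped Matrix

/-- The coefficient of `ψ p` in `d^ψ(n)`, for `p` prime. It vanishes at the primes not dividing `n`
and at all `p` that are not prime. -/
def derivCoeff (n p : ℕ) : ℕ := n / p * n.factorization p

/-- The coefficient of `ψ p` in the defect of additivity `d^ψ(a + b) - d^ψ(a) - d^ψ(b)`. -/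
def derivDefect (a b p : ℕ) : ℤ := derivCoeff (a + b) p - derivCoeff a p - derivCoeff b p

variable {n a b : ℕ} {S : Finset ℕ}

lemma derivCoeff_eq_zero {p : ℕ} (hp : p ∉ n.primeFactors) : derivCoeff n p = 0 := by
  rw [derivCoeff, Finsupp.notMem_support_iff.1 hp, mul_zero]

lemma dpsi_natCast (hS : n.primeFactors ⊆ S) (ψ : ℕ → ℤ) :
    dpsi ψ n = ∑ p ∈ S, derivCoeff n p * ψ p := by
  rw [← sum_subset hS fun p _ hp => by rw [derivCoeff_eq_zero hp, Nat.cast_zero, zero_mul]]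
  simp [dpsi, derivCoeff]

lemma sum_derivCoeff_mul_mul_log (hS : n.primeFactors ⊆ S) :
    ∑ p ∈ S, derivCoeff n p * (p * Real.log p) = n * Real.log n := by
  rw [← sum_subset hS fun p _ hp => by rw [derivCoeff_eq_zero hp, Nat.cast_zero, zero_mul],
    Real.log_nat_eq_sum_factorization, Finsupp.sum, Nat.support_factorization, mul_sum]
  refine sum_congr rfl fun p hp => ?_
  have cancel : ((n / p : ℕ) : ℝ) * p = n :=
    mod_cast Nat.div_mul_cancel (Nat.dvd_of_mem_primeFactors hp)
  rw [derivCoeff, ← cancel]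
  push_cast
  ring

lemma sum_derivCoeff_le (hS : n.primeFactors ⊆ S) :
    ∑ p ∈ S, (derivCoeff n p : ℝ) ≤ n * Real.log n / (2 * Real.log 2) := by
  rw [le_div_iff₀ (by positivity), ← sum_derivCoeff_mul_mul_log hS, sum_mul]
  refine sum_le_sum fun p _ => ?_
  by_cases hp : p ∈ n.primeFactors
  · have two_le : (2 : ℝ) ≤ p := mod_cast (Nat.prime_of_mem_primeFactors hp).two_le
    gcongr
  · simp [derivCoeff_eq_zero hp]

lemma mul_log_add_mul_log_lt (ha : 0 < a) (hb : 0 < b) :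
    a * Real.log a + b * Real.log b < (a + b : ℕ) * Real.log (a + b : ℕ) := by
  have log_lt {m : ℕ} (hm : 0 < m) (h : m < a + b) : Real.log m < Real.log (a + b : ℕ) :=
    Real.log_lt_log (mod_cast hm) (mod_cast h)
  rw [Nat.cast_add a b, add_mul, ← Nat.cast_add]
  exact add_lt_add (mul_lt_mul_of_pos_left (log_lt ha (by omega)) (by positivity))
    (mul_lt_mul_of_pos_left (log_lt hb (by omega)) (by positivity))

lemma dpsi_add_sub_dpsi_sub_dpsi (ha : a.primeFactors ⊆ S) (hb : b.primeFactors ⊆ S)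
    (hab : (a + b).primeFactors ⊆ S) (ψ : ℕ → ℤ) :
    dpsi ψ (a + b) - dpsi ψ a - dpsi ψ b = ∑ p ∈ S, derivDefect a b p * ψ p := by
  rw [← Nat.cast_add, dpsi_natCast ha, dpsi_natCast hb, dpsi_natCast hab, ← sum_sub_distrib,
    ← sum_sub_distrib]
  simp only [derivDefect, sub_mul]

lemma sum_norm_derivDefect_le (ha : a.primeFactors ⊆ S) (hb : b.primeFactors ⊆ S)
    (hab : (a + b).primeFactors ⊆ S) :
    ∑ p ∈ S, ‖derivDefect a b p‖ ≤
      (a + b : ℕ) * Real.log (a + b : ℕ) / (2 * Real.log 2) + a * Real.log a / (2 * Real.log 2) +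
        b * Real.log b / (2 * Real.log 2) := by
  have triangle (p : ℕ) : ‖derivDefect a b p‖ ≤
      ‖(derivCoeff (a + b) p : ℤ)‖ + ‖(derivCoeff a p : ℤ)‖ + ‖(derivCoeff b p : ℤ)‖ :=
    norm_sub_le_of_le (norm_sub_le _ _) le_rfl
  refine (sum_le_sum fun p _ => triangle p).trans ?_
  simp only [sum_add_distrib, Int.norm_natCast]
  gcongr
  exacts [sum_derivCoeff_le hab, sum_derivCoeff_le ha, sum_derivCoeff_le hb]

lemma exists_derivDefect_ne_zero (ha₀ : 0 < a) (hb₀ : 0 < b) (ha : a.primeFactors ⊆ S)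
    (hb : b.primeFactors ⊆ S) (hab : (a + b).primeFactors ⊆ S) :
    ∃ p ∈ S, derivDefect a b p ≠ 0 := by
  have log_sum : ∑ p ∈ S, derivDefect a b p * (p * Real.log p) =
      (a + b : ℕ) * Real.log (a + b : ℕ) - a * Real.log a - b * Real.log b := by
    rw [← sum_derivCoeff_mul_mul_log ha, ← sum_derivCoeff_mul_mul_log hb,
      ← sum_derivCoeff_mul_mul_log hab, ← sum_sub_distrib, ← sum_sub_distrib]
    simp [derivDefect, sub_mul]
  by_contra! h
  rw [sum_eq_zero fun p hp => by rw [h p hp, Int.cast_zero, zero_mul]] at log_sum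
  linarith [mul_log_add_mul_log_lt ha₀ hb₀]

lemma extend_apply_of_notMem (x : S → ℤ) {p : ℕ} (hp : p ∉ S) :
    Function.extend Subtype.val x (0 : ℕ → ℤ) p = 0 :=
  Function.extend_apply' _ _ _ fun ⟨q, hq⟩ => hp (hq ▸ q.2)

lemma dNorm_extend_le (x : S → ℤ) : dNorm (Function.extend Subtype.val x 0) ≤ ‖x‖ := by
  refine ciSup_le fun p => ?_
  by_cases hp : p ∈ S
  · lift p to S using hp
    rw [Subtype.val_injective.extend_apply, ← Int.norm_eq_abs]
    exact norm_le_pi_norm x p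
  · rw [extend_apply_of_notMem x hp, Int.cast_zero, abs_zero]
    exact norm_nonneg x

lemma primeFactors_subset_primeFactors_mul_mul_add (ha : 0 < a) (hb : 0 < b) :
    a.primeFactors ⊆ (a * b * (a + b)).primeFactors ∧
      b.primeFactors ⊆ (a * b * (a + b)).primeFactors ∧
      (a + b).primeFactors ⊆ (a * b * (a + b)).primeFactors := by
  have mono {n : ℕ} (h : n ∣ a * b * (a + b)) : n.primeFactors ⊆ (a * b * (a + b)).primeFactors :=
    Nat.primeFactors_mono h (by positivity)
  exact ⟨mono ⟨b * (a + b), by ring⟩, mono ⟨a * (a + b), by ring⟩, mono ⟨a * b, by ring⟩⟩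

lemma memT_extend (ha : 0 < a) (hb : 0 < b) {x : (a * b * (a + b)).primeFactors → ℤ}
    (hx : (fun p : (a * b * (a + b)).primeFactors => derivDefect a b p) ⬝ᵥ x = 0) :
    MemT a b (Function.extend Subtype.val x 0) := by
  have vanish {p : ℕ} (h : ¬ (p.Prime ∧ p ∣ a * b * (a + b))) :
      Function.extend Subtype.val x (0 : ℕ → ℤ) p = 0 :=
    extend_apply_of_notMem x fun hp =>
      h ⟨Nat.prime_of_mem_primeFactors hp, Nat.dvd_of_mem_primeFactors hp⟩
  obtain ⟨hSa, hSb, hSab⟩ := primeFactors_subset_primeFactors_mul_mul_add ha hb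
  refine ⟨⟨fun p hp => vanish fun h => hp h.1, ∑ p, |x p|, fun p => ?_⟩,
    fun p _ hp => vanish fun h => hp h.2, ?_⟩
  · by_cases hp : p ∈ (a * b * (a + b)).primeFactors
    · lift p to (a * b * (a + b)).primeFactors using hp
      rw [Subtype.val_injective.extend_apply]
      exact single_le_sum (f := fun q => |x q|) (fun q _ => abs_nonneg _) (mem_univ p)
    · rw [extend_apply_of_notMem x hp, abs_zero]
      positivity
  · rw [← sub_eq_zero, ← sub_sub, dpsi_add_sub_dpsi_sub_dpsi hSa hSb hSab, ← hx, dotProduct,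
      ← sum_coe_sort]
    simp only [Subtype.val_injective.extend_apply]

lemma sum_norm_derivDefect_le_mul_log_div (ha : 0 < a) (hb : 0 < b) :
    ∑ p ∈ (a * b * (a + b)).primeFactors, ‖derivDefect a b p‖ ≤
      (a + b : ℕ) * Real.log (a + b : ℕ) / Real.log 2 := by
  obtain ⟨hSa, hSb, hSab⟩ := primeFactors_subset_primeFactors_mul_mul_add ha hb
  refine (sum_norm_derivDefect_le hSa hSb hSab).trans ?_
  rw [← add_div, ← add_div, div_le_div_iff₀ (by positivity) (by positivity)]
  nlinarith [mul_log_add_mul_log_lt ha hb, Real.log_pos one_lt_two]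

lemma two_le_card_primeFactors_mul_mul_add (hab : Nat.Coprime a b) (hc : 2 < a + b) :
    2 ≤ #(a * b * (a + b)).primeFactors := by
  have ha : a ≠ 0 := by
    rintro rfl
    simp_all
  have hb : b ≠ 0 := by
    rintro rfl
    simp_all
  have one_lt_mul : 1 < a * b := Nat.one_lt_mul_iff.2 ⟨by omega, by omega, by omega⟩
  have coprime : Nat.Coprime (a * b) (a + b) :=
    Nat.Coprime.mul_left (by simpa using hab) (by simpa using hab.symm)
  rw [coprime.primeFactors_mul, card_union_of_disjoint coprime.disjoint_primeFactors]
  exact Nat.add_le_add (card_pos.2 (Nat.nonempty_primeFactors.2 one_lt_mul))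
    (card_pos.2 (Nat.nonempty_primeFactors.2 (by omega)))

lemma mul_log_div_log_two_le {k : ℕ} (hk : 2 ≤ k) (n : ℕ) :
    n * Real.log n / Real.log 2 ≤ k / (2 * Real.log 2) * n * Real.log n :=
  calc n * Real.log n / Real.log 2 = 2 / (2 * Real.log 2) * n * Real.log n := by field_simp
    _ ≤ k / (2 * Real.log 2) * n * Real.log n := by
        gcongr
        exact_mod_cast hk

end ArithmeticDerivative

theorem existence_controlled_size_general (a b : ℕ) (ha : 0 < a) (hb : 0 < b) :
    ∃ ψs : Fin ((a * b * (a + b)).primeFactors.card - 1) → (ℕ → ℤ),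
      (∀ i, MemT a b (ψs i)) ∧ LinearIndependent ℤ ψs ∧
      ∏ i, dNorm (ψs i) ≤ ((a + b : ℕ) : ℝ) * Real.log ((a + b : ℕ) : ℝ) / Real.log 2 := by
  obtain ⟨hSa, hSb, hSab⟩ := primeFactors_subset_primeFactors_mul_mul_add ha hb
  obtain ⟨p, hp, hp0⟩ := exists_derivDefect_ne_zero ha hb hSa hSb hSab
  have siegel := exists_linearIndependent_dotProduct_eq_zero_prod_norm_le
    (L := fun p : (a * b * (a + b)).primeFactors => derivDefect a b p)
    (Function.ne_iff.2 ⟨⟨p, hp⟩, hp0⟩)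
  rw [Fintype.card_coe, sum_coe_sort _ fun p => ‖derivDefect a b p‖] at siegel
  obtain ⟨x, hx, independent, prod_le⟩ := siegel
  refine ⟨fun i => Function.extend Subtype.val (x i) 0, fun i => memT_extend ha hb (hx i),
    independent.map' (Function.ExtendByZero.linearMap ℤ Subtype.val) ?_, ?_⟩
  · exact LinearMap.ker_eq_bot.2 (Function.extend_injective Subtype.val_injective _)
  · calc ∏ i, dNorm (Function.extend Subtype.val (x i) 0) ≤ ∏ i, ‖x i‖ :=
        prod_le_prod (fun i _ => Real.iSup_nonneg fun p => abs_nonneg _) fun i _ =>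
          dNorm_extend_le (x i)
      _ ≤ _ := prod_le.trans (sum_norm_derivDefect_le_mul_log_div ha hb)

/-- Existence of arithmetic derivatives of controlled size. -/
theorem existence_controlled_size (a b : ℕ) (ha : 0 < a) (hb : 0 < b)
    (hab : Nat.Coprime a b) (hc : 2 < a + b) :
    1 ≤ (a * b * (a + b)).primeFactors.card - 1 ∧
    ∃ ψs : Fin ((a * b * (a + b)).primeFactors.card - 1) → (ℕ → ℤ),
      (∀ i, MemT a b (ψs i)) ∧ LinearIndependent ℤ ψs ∧
      ∏ i, dNorm (ψs i) ≤
        ((a * b * (a + b)).primeFactors.card : ℝ) / (2 * Real.log 2) *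
          ((a + b : ℕ) : ℝ) * Real.log ((a + b : ℕ) : ℝ) := by
  have two_le := two_le_card_primeFactors_mul_mul_add hab hc
  obtain ⟨ψs, mem, independent, prod_le⟩ := existence_controlled_size_general a b ha hb
  exact ⟨Nat.le_sub_of_add_le two_le, ψs, mem, independent,
    prod_le.trans (mul_log_div_log_two_le two_le _)⟩
end

section
/- Small non-trivial derivatives: for every ε > 0, for all but finitely many triples (a,b,c) of pairwise coprime integers all larger than 1 satisfying a + b = c, there is a derivation ψ ∈ 𝒯(a,b) with ‖ψ‖ < c^{1/2 + ε} such that not all of the integers d^ψ(a), d^ψ(b), d^ψ(c) are zero. -/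
open Finset

/-!
Let `c = a + b`. The condition `d^ψ(c) = d^ψ(a) + d^ψ(b)` is one linear equation in the values
`ψ(p)`, with coefficients of size at most `c log c`. Pick one prime divisor of each of `a`, `b`, `c`
and let `ψ` live on these three primes: Siegel's lemma for one equation in three unknowns gives a
nonzero solution with `‖ψ‖ ≤ (3 c log c)^{1/2}`. By coprimality each of `d^ψ(a)`, `d^ψ(b)`, `d^ψ(c)`
is a positive multiple of the value of `ψ` at one of the three primes, so they do not all vanish.
-/

/-- The partial derivative `n·v_p(n)/p`, i.e. the coefficient of `ψ(p)` in `d^ψ(n)`. When `p ∤ n`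
the rounding of `n / p` is harmless, since then `v_p(n) = 0`. -/
def partialDeriv (p : ℕ) (n : ℤ) : ℤ :=
  n / (p : ℤ) * (n.natAbs.factorization p : ℤ)

section PartialDerivatives

variable {p n : ℕ}

theorem partialDeriv_eq_zero {m : ℤ} (h : p ∉ m.natAbs.primeFactors) : partialDeriv p m = 0 := by
  have hv : m.natAbs.factorization p = 0 := by
    rwa [← Finsupp.notMem_support_iff, Nat.support_factorization]
  rw [partialDeriv, hv, Nat.cast_zero, mul_zero]

theorem partialDeriv_nonneg (p n : ℕ) : 0 ≤ partialDeriv p (n : ℤ) := by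
  unfold partialDeriv
  positivity

theorem partialDeriv_pos (h : p ∈ n.primeFactors) : 0 < partialDeriv p (n : ℤ) := by
  obtain ⟨hp, hpn, hn⟩ := Nat.mem_primeFactors.mp h
  have hquot : 0 < n / p := Nat.div_pos (Nat.le_of_dvd hn.bot_lt hpn) hp.pos
  have hval : 0 < n.factorization p := hp.factorization_pos_of_dvd hn hpn
  rw [partialDeriv, Int.natAbs_natCast]
  exact_mod_cast Nat.mul_pos hquot hval

theorem factorization_mul_log_two_le_log (h : p ∈ n.primeFactors) :
    (n.factorization p : ℝ) * Real.log 2 ≤ Real.log n := by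
  obtain ⟨hp, -, hn⟩ := Nat.mem_primeFactors.mp h
  have hpow : 2 ^ n.factorization p ≤ n :=
    (Nat.pow_le_pow_left hp.two_le _).trans (Nat.ordProj_le p hn)
  rw [← Real.log_pow]
  exact Real.log_le_log (by positivity) (by exact_mod_cast hpow)

theorem partialDeriv_le_mul_log (p n : ℕ) : (partialDeriv p (n : ℤ) : ℝ) ≤ n * Real.log n := by
  by_cases h : p ∈ n.primeFactors
  · have hp : (2 : ℝ) ≤ p := by exact_mod_cast (Nat.prime_of_mem_primeFactors h).two_le
    have hquot : ((n / p : ℕ) : ℝ) ≤ n / 2 := Nat.cast_div_le.trans (by gcongr)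
    have hval : (n.factorization p : ℝ) ≤ 2 * Real.log n := by
      have := factorization_mul_log_two_le_log h
      nlinarith [Real.log_two_gt_d9, (n.factorization p).cast_nonneg (α := ℝ)]
    calc (partialDeriv p (n : ℤ) : ℝ) = (n / p : ℕ) * n.factorization p := by
          rw [partialDeriv, Int.natAbs_natCast]
          norm_cast
      _ ≤ n / 2 * (2 * Real.log n) := by gcongr
      _ = n * Real.log n := by ring
  · rw [partialDeriv_eq_zero h, Int.cast_zero]
    exact mul_nonneg n.cast_nonneg (Real.log_natCast_nonneg n)

theorem abs_partialDeriv_add_sub_sub_le {a b : ℕ} (ha : 0 < a) (hb : 0 < b) (p : ℕ) :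
    |((partialDeriv p (a + b) - partialDeriv p a - partialDeriv p b : ℤ) : ℝ)| ≤
      ((a + b : ℕ) : ℝ) * Real.log (a + b : ℕ) := by
  have hsum : (partialDeriv p a : ℝ) + partialDeriv p b ≤
      ((a + b : ℕ) : ℝ) * Real.log (a + b : ℕ) :=
    calc (partialDeriv p a : ℝ) + partialDeriv p b
        ≤ a * Real.log a + b * Real.log b :=
          add_le_add (partialDeriv_le_mul_log p a) (partialDeriv_le_mul_log p b)
      _ ≤ a * Real.log (a + b : ℕ) + b * Real.log (a + b : ℕ) := by
          gcongr <;> omega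
      _ = ((a + b : ℕ) : ℝ) * Real.log (a + b : ℕ) := by push_cast; ring
  have hc := partialDeriv_le_mul_log p (a + b)
  have hpos (k : ℕ) : (0 : ℝ) ≤ partialDeriv p k := by exact_mod_cast partialDeriv_nonneg p k
  have ha₀ := hpos a
  have hb₀ := hpos b
  have hc₀ := hpos (a + b)
  rw [Nat.cast_add (R := ℤ)] at hc hc₀
  rw [abs_le]
  push_cast at hsum hc ⊢
  constructor <;> linarith

end PartialDerivatives

section Derivations

variable {ψ : ℕ → ℤ} {S : Finset ℕ} {p n : ℕ}

theorem dpsi_eq_sum_partialDeriv (hψ : ∀ p ∉ S, ψ p = 0) (n : ℤ) :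
    dpsi ψ n = ∑ p ∈ S, partialDeriv p n * ψ p := by
  change ∑ p ∈ n.natAbs.primeFactors, partialDeriv p n * ψ p = _
  have hout {p : ℕ} (hp : p ∉ n.natAbs.primeFactors) : partialDeriv p n * ψ p = 0 := by
    rw [partialDeriv_eq_zero hp, zero_mul]
  have hS {p : ℕ} (hp : p ∉ S) : partialDeriv p n * ψ p = 0 := by rw [hψ p hp, mul_zero]
  rw [sum_subset subset_union_left fun p _ hp => hout hp,
    sum_subset subset_union_right fun p _ hp => hS hp]

theorem dpsi_ne_zero (hp : p ∈ n.primeFactors) (hψp : ψ p ≠ 0)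
    (hψ : ∀ q ∈ n.primeFactors, q ≠ p → ψ q = 0) : dpsi ψ (n : ℤ) ≠ 0 := by
  have heq : dpsi ψ (n : ℤ) = partialDeriv p n * ψ p :=
    sum_eq_single_of_mem p hp fun q hq hqp => by rw [hψ q hq hqp, mul_zero]
  rw [heq]
  exact mul_ne_zero (partialDeriv_pos hp).ne' hψp

theorem dNorm_le {R : ℝ} (hR : ∀ p, |(ψ p : ℝ)| ≤ R) : dNorm ψ ≤ R :=
  ciSup_le hR

theorem memT_of_sum_eq_zero {a b : ℕ} (hS : S ⊆ (a * b * (a + b)).primeFactors)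
    (hψ : ∀ p ∉ S, ψ p = 0)
    (hsum : ∑ p ∈ S, (partialDeriv p (a + b) - partialDeriv p a - partialDeriv p b) * ψ p = 0) :
    MemT a b ψ := by
  refine ⟨⟨fun p hp => hψ p fun hpS => hp (Nat.prime_of_mem_primeFactors (hS hpS)),
    ∑ p ∈ S, |ψ p|, fun p => ?_⟩,
    fun p _ hp => hψ p fun hpS => hp (Nat.dvd_of_mem_primeFactors (hS hpS)), ?_⟩
  · by_cases hp : p ∈ S
    · exact single_le_sum (f := fun p => |ψ p|) (fun q _ => abs_nonneg (ψ q)) hp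
    · rw [hψ p hp, abs_zero]
      exact sum_nonneg fun q _ => abs_nonneg (ψ q)
  · simp only [dpsi_eq_sum_partialDeriv hψ]
    simp only [sub_mul, sum_sub_distrib] at hsum
    linarith

end Derivations

section Siegel

attribute [local instance] Matrix.seminormedAddCommGroup

theorem exists_ne_zero_sum_mul_eq_zero_of_abs_le {ι : Type*} {S : Finset ι} (hS : 1 < #S)
    {w : ι → ℤ} {M : ℝ} (hM : 1 ≤ M) (hw : ∀ i ∈ S, |(w i : ℝ)| ≤ M) :
    ∃ x : ι → ℤ, x ≠ 0 ∧ (∀ i ∉ S, x i = 0) ∧ ∑ i ∈ S, w i * x i = 0 ∧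
      ∀ i, |(x i : ℝ)| ≤ (#S * M) ^ (1 / (#S - 1) : ℝ) := by
  classical
  let A : Matrix Unit S ℤ := .of fun _ i => w i
  have hA : ‖A‖ ≤ M :=
    (Matrix.norm_le_iff (by linarith)).mpr fun _ i => (Int.norm_eq_abs _).trans_le (hw i i.2)
  obtain ⟨t, ht, hAt, hnorm⟩ := Int.Matrix.exists_ne_zero_int_vec_norm_le A (by simpa) (by simp)
  simp only [Fintype.card_unit, Fintype.card_coe, Nat.cast_one] at hnorm
  have hexp : (0 : ℝ) ≤ 1 / (#S - 1) := by
    have : (1 : ℝ) < #S := by exact_mod_cast hS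
    exact one_div_nonneg.mpr (by linarith)
  have hbound : ‖t‖ ≤ (#S * M) ^ (1 / (#S - 1) : ℝ) := by
    refine hnorm.trans ?_
    gcongr
    exact max_le hM hA
  let x : ι → ℤ := fun i => if h : i ∈ S then t ⟨i, h⟩ else 0
  have hx (i : S) : x i = t i := dif_pos i.2
  refine ⟨x, fun hx₀ => ht (funext fun i => ?_), fun i hi => dif_neg hi, ?_, fun i => ?_⟩
  · rw [← hx, hx₀, Pi.zero_apply, Pi.zero_apply]
  · rw [← sum_coe_sort]
    simp only [hx]
    exact congrFun hAt ()
  · by_cases hi : i ∈ S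
    · rw [hx ⟨i, hi⟩, ← Int.norm_eq_abs]
      exact (norm_le_pi_norm t _).trans hbound
    · rw [show x i = 0 from dif_neg hi, Int.cast_zero, abs_zero]
      exact (norm_nonneg t).trans hbound

end Siegel

theorem one_le_natCast_mul_log {n : ℕ} (hn : 2 ≤ n) : 1 ≤ (n : ℝ) * Real.log n := by
  have hn' : (2 : ℝ) ≤ n := by exact_mod_cast hn
  calc (1 : ℝ) ≤ 2 * Real.log 2 := by linarith [Real.log_two_gt_d9]
    _ ≤ n * Real.log n := by gcongr

theorem exists_ne_zero_memT_dNorm_le {a b : ℕ} (ha : 0 < a) (hb : 0 < b) {S : Finset ℕ}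
    (hS : S ⊆ (a * b * (a + b)).primeFactors) (hcard : 1 < #S) :
    ∃ ψ : ℕ → ℤ, ψ ≠ 0 ∧ (∀ p ∉ S, ψ p = 0) ∧ MemT a b ψ ∧
      dNorm ψ ≤ (#S * ((a + b : ℕ) * Real.log (a + b : ℕ))) ^ (1 / (#S - 1) : ℝ) := by
  obtain ⟨ψ, hψ₀, hψS, hsum, hbound⟩ := exists_ne_zero_sum_mul_eq_zero_of_abs_le hcard
    (one_le_natCast_mul_log (by omega : 2 ≤ a + b))
    fun p _ => abs_partialDeriv_add_sub_sub_le ha hb p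
  exact ⟨ψ, hψ₀, hψS, memT_of_sum_eq_zero hS hψS hsum, dNorm_le hbound⟩

theorem exists_memT_dNorm_le_sqrt {a b : ℕ} (ha : 1 < a) (hb : 1 < b) (hab : a.Coprime b) :
    ∃ ψ : ℕ → ℤ, MemT a b ψ ∧
      dNorm ψ ≤ √(3 * ((a + b : ℕ) * Real.log (a + b : ℕ))) ∧
      ¬ (dpsi ψ (a : ℤ) = 0 ∧ dpsi ψ (b : ℤ) = 0 ∧ dpsi ψ ((a + b : ℕ) : ℤ) = 0) := by
  have hdisj_ab : Disjoint a.primeFactors b.primeFactors := hab.disjoint_primeFactors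
  have hdisj_ac : Disjoint a.primeFactors (a + b).primeFactors :=
    (Nat.coprime_self_add_right.mpr hab).disjoint_primeFactors
  have hdisj_bc : Disjoint b.primeFactors (a + b).primeFactors :=
    (Nat.coprime_add_self_right.mpr hab.symm).disjoint_primeFactors
  obtain ⟨p, hp⟩ := Nat.nonempty_primeFactors.mpr ha
  obtain ⟨q, hq⟩ := Nat.nonempty_primeFactors.mpr hb
  obtain ⟨r, hr⟩ := Nat.nonempty_primeFactors.mpr (by omega : 1 < a + b)
  have hcard : #{p, q, r} = 3 := card_eq_three.mpr ⟨p, q, r,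
    disjoint_iff_ne.mp hdisj_ab p hp q hq, disjoint_iff_ne.mp hdisj_ac p hp r hr,
    disjoint_iff_ne.mp hdisj_bc q hq r hr, rfl⟩
  have hsub : {p, q, r} ⊆ (a * b * (a + b)).primeFactors := by
    rw [Nat.primeFactors_mul (by positivity) (by positivity),
      Nat.primeFactors_mul (by positivity) (by positivity)]
    grind
  obtain ⟨ψ, hψ₀, hψS, hmem, hnorm⟩ :=
    exists_ne_zero_memT_dNorm_le (by omega) (by omega) hsub (by omega)
  refine ⟨ψ, hmem, ?_, fun ⟨hda, hdb, hdc⟩ => hψ₀ ?_⟩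
  · rw [hcard] at hnorm
    convert hnorm using 1
    rw [Real.sqrt_eq_rpow]
    norm_num
  · simp only [disjoint_left] at hdisj_ab hdisj_ac hdisj_bc
    have only_p : ∀ l ∈ a.primeFactors, l ≠ p → ψ l = 0 := by grind
    have only_q : ∀ l ∈ b.primeFactors, l ≠ q → ψ l = 0 := by grind
    have only_r : ∀ l ∈ (a + b).primeFactors, l ≠ r → ψ l = 0 := by grind
    have hψp : ψ p = 0 := by_contra fun h => dpsi_ne_zero hp h only_p hda
    have hψq : ψ q = 0 := by_contra fun h => dpsi_ne_zero hq h only_q hdb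
    have hψr : ψ r = 0 := by_contra fun h => dpsi_ne_zero hr h only_r hdc
    have hψ_zero : ∀ l, ψ l = 0 := by grind
    exact funext hψ_zero

theorem eventually_sqrt_mul_log_lt_rpow (K : ℝ) {ε : ℝ} (hε : 0 < ε) :
    ∀ᶠ x : ℝ in Filter.atTop, √(K * (x * Real.log x)) < x ^ (1 / 2 + ε) := by
  have hlog : (fun x => K * Real.log x) =o[Filter.atTop] fun x : ℝ => x ^ (2 * ε) :=
    (isLittleO_log_rpow_atTop (by positivity)).const_mul_left K
  filter_upwards [hlog.bound one_half_pos, Filter.eventually_gt_atTop 0] with x hx hx₀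
  have hpow : (x ^ (1 / 2 + ε)) ^ 2 = x * x ^ (2 * ε) := by
    rw [← Real.rpow_mul_natCast hx₀.le, ← Real.rpow_one_add' hx₀.le (by positivity)]
    congr 1
    push_cast
    ring
  have hrpow : 0 < x ^ (2 * ε) := Real.rpow_pos_of_pos hx₀ _
  rw [Real.sqrt_lt' (by positivity), hpow]
  calc K * (x * Real.log x) = x * (K * Real.log x) := by ring
    _ ≤ x * (1 / 2 * x ^ (2 * ε)) := by
        refine mul_le_mul_of_nonneg_left ?_ hx₀.le
        simpa only [Real.norm_of_nonneg hrpow.le] using (Real.le_norm_self _).trans hx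
    _ < x * x ^ (2 * ε) := by gcongr; linarith

/-- Small non-trivial derivatives. -/
theorem small_nontrivial_derivatives (ε : ℝ) (hε : 0 < ε) :
    {t : ℕ × ℕ × ℕ | 1 < t.1 ∧ 1 < t.2.1 ∧ 1 < t.2.2 ∧ t.1 + t.2.1 = t.2.2 ∧
      Nat.Coprime t.1 t.2.1 ∧ Nat.Coprime t.1 t.2.2 ∧ Nat.Coprime t.2.1 t.2.2 ∧
      ¬ ∃ ψ : ℕ → ℤ, MemT t.1 t.2.1 ψ ∧ dNorm ψ < (t.2.2 : ℝ) ^ ((1 : ℝ) / 2 + ε) ∧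
        ¬ (dpsi ψ (t.1 : ℤ) = 0 ∧ dpsi ψ (t.2.1 : ℤ) = 0 ∧
            dpsi ψ (t.2.2 : ℤ) = 0)}.Finite := by
  obtain ⟨M, hM⟩ := Filter.eventually_atTop.mp
    (tendsto_natCast_atTop_atTop.eventually (eventually_sqrt_mul_log_lt_rpow 3 hε))
  refine (finite_toSet (range M ×ˢ range M ×ˢ range M)).subset ?_
  rintro ⟨a, b, c⟩ ⟨ha, hb, -, rfl : a + b = c, hab, -, -, hno⟩
  have hlt : a + b < M := by
    by_contra! hMc
    obtain ⟨ψ, hψ, hnorm, hne⟩ := exists_memT_dNorm_le_sqrt ha hb hab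
    exact hno ⟨ψ, hψ, hnorm.trans_lt (hM (a + b) hMc), hne⟩
  simp only [coe_product, coe_range, Set.mem_prod, Set.mem_Iio]
  omega
end

section
/- An abc estimate: let a, b be coprime positive integers with (a,b) ≠ (1,1), let c = a + b, and let ψ ∈ 𝒯(a,b). If a and b are ψ-independent, then c / log c ≤ rad(abc) · ‖ψ‖ / log 2. -/
open Finset

/-!
Multiplying `d^ψ(n)` by `rad(n)` clears the denominators `p` of `d^ψ(n)/n = ∑ v_p(n) ψ(p)/p`, so
`n ∣ rad(n) d^ψ(n)`. Additivity gives `W^ψ(a,b) = W^ψ(a,c) = W^ψ(c,b)`; hence the pairwise coprime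
integers `a`, `b`, `c` all divide `rad(abc) W^ψ(a,b)`, and if this is nonzero then
`abc ≤ rad(abc) |W^ψ(a,b)|`. In the other direction, `1/p ≤ 1/2` gives
`|d^ψ(n)| ≤ n ‖ψ‖ Ω(n) / 2`, so `|W^ψ(a,b)| ≤ ab ‖ψ‖ Ω(ab) / 2`. Cancelling `ab` leaves
`2c ≤ rad(abc) ‖ψ‖ Ω(ab)`, and `2 ^ Ω(ab) ≤ ab ≤ c²`.
-/

section

open scoped ArithmeticFunction.Omega

variable {ψ : ℕ → ℤ}

theorem radN_pos (n : ℕ) : 0 < radN n :=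
  prod_pos fun _ hp => Nat.pos_of_mem_primeFactors hp

theorem radN_dvd_radN {m n : ℕ} (hn : n ≠ 0) (h : m ∣ n) : radN m ∣ radN n :=
  prod_dvd_prod_of_subset _ _ _ (Nat.primeFactors_mono h hn)

theorem two_pow_cardFactors_le {n : ℕ} (hn : n ≠ 0) : 2 ^ Ω n ≤ n := by
  rw [ArithmeticFunction.cardFactors_apply]
  calc 2 ^ n.primeFactorsList.length ≤ n.primeFactorsList.prod :=
        List.pow_card_le_prod _ _ fun _ hp => (Nat.prime_of_mem_primeFactorsList hp).two_le
    _ = n := Nat.prod_primeFactorsList hn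

theorem cardFactors_mul_log_two_le {n : ℕ} (hn : n ≠ 0) : Ω n * Real.log 2 ≤ Real.log n := by
  rw [← Real.log_pow]
  exact Real.log_le_log (by positivity) (mod_cast two_pow_cardFactors_le hn)

theorem dvd_radN_mul_dpsi (ψ : ℕ → ℤ) (n : ℤ) : n ∣ radN n.natAbs * dpsi ψ n := by
  rw [dpsi, mul_sum]
  refine dvd_sum fun p hp => ?_
  have p_dvd_n : (p : ℤ) ∣ n := Int.natCast_dvd.mpr (Nat.dvd_of_mem_primeFactors hp)
  have p_dvd_rad : (p : ℤ) ∣ radN n.natAbs := mod_cast dvd_prod_of_mem (fun q => q) hp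
  have n_dvd : n ∣ radN n.natAbs * (n / p) := by
    simpa only [Int.mul_ediv_cancel' p_dvd_n] using mul_dvd_mul_right p_dvd_rad (n / (p : ℤ))
  simpa only [mul_assoc] using n_dvd.mul_right (n.natAbs.factorization p * ψ p)

theorem dvd_radN_mul_Wpsi_left (ψ : ℕ → ℤ) (m n : ℤ) : m ∣ radN m.natAbs * Wpsi ψ m n := by
  have expand : radN m.natAbs * Wpsi ψ m n =
      m * (radN m.natAbs * dpsi ψ n) - n * (radN m.natAbs * dpsi ψ m) := by
    rw [Wpsi]; ring
  rw [expand]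
  exact dvd_sub (dvd_mul_right _ _) ((dvd_radN_mul_dpsi ψ m).mul_left n)

theorem Wpsi_swap (ψ : ℕ → ℤ) (m n : ℤ) : Wpsi ψ n m = -Wpsi ψ m n :=
  (neg_sub _ _).symm

theorem Wpsi_add_left {m n : ℤ} (hadd : dpsi ψ (m + n) = dpsi ψ m + dpsi ψ n) :
    Wpsi ψ (m + n) n = Wpsi ψ m n := by
  rw [Wpsi, Wpsi, hadd]; ring

theorem mul_mul_add_dvd_radN_mul_Wpsi {a b : ℕ} (ha : 0 < a) (hb : 0 < b)
    (hab : a.Coprime b) (hadd : dpsi ψ ((a : ℤ) + b) = dpsi ψ a + dpsi ψ b) :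
    ((a * b * (a + b) : ℕ) : ℤ) ∣ radN (a * b * (a + b)) * Wpsi ψ a b := by
  have dvd_of_dvd {n : ℕ} (hn : n ∣ a * b * (a + b)) (h : (n : ℤ) ∣ radN n * Wpsi ψ a b) :
      (n : ℤ) ∣ radN (a * b * (a + b)) * Wpsi ψ a b :=
    h.trans <| mul_dvd_mul_right
      (Int.natCast_dvd_natCast.mpr (radN_dvd_radN (by positivity) hn)) _
  have a_dvd := dvd_of_dvd ⟨b * (a + b), by ring⟩ (dvd_radN_mul_Wpsi_left ψ a b)
  have b_dvd := dvd_of_dvd (n := b) ⟨a * (a + b), by ring⟩ <| by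
    simpa only [Int.natAbs_natCast, Wpsi_swap ψ a b, mul_neg, dvd_neg]
      using dvd_radN_mul_Wpsi_left ψ b a
  have c_dvd := dvd_of_dvd (dvd_mul_left (a + b) (a * b)) <| by
    simpa only [← Nat.cast_add, Int.natAbs_natCast]
      using Wpsi_add_left hadd ▸ dvd_radN_mul_Wpsi_left ψ (a + b : ℤ) b
  have ab_coprime_c : (a * b).Coprime (a + b) :=
    (Nat.coprime_self_add_right.mpr hab).mul_left (Nat.coprime_add_self_right.mpr hab.symm)
  rw [Nat.cast_mul, Nat.cast_mul]
  refine IsCoprime.mul_dvd ?_ (hab.isCoprime.mul_dvd a_dvd b_dvd) c_dvd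
  exact mod_cast ab_coprime_c.isCoprime

theorem abs_le_dNorm (hψ : IsDeriv ψ) (p : ℕ) : |(ψ p : ℝ)| ≤ dNorm ψ := by
  obtain ⟨-, B, hB⟩ := hψ
  have bdd : BddAbove (Set.range fun q => |(ψ q : ℝ)|) :=
    ⟨B, Set.forall_mem_range.mpr fun q => mod_cast hB q⟩
  exact le_ciSup bdd p

theorem dNorm_nonneg (ψ : ℕ → ℤ) : 0 ≤ dNorm ψ :=
  Real.iSup_nonneg fun _ => abs_nonneg _

theorem two_mul_abs_ediv_le {n d : ℤ} (hd : 2 ≤ d) (hdn : d ∣ n) : 2 * |n / d| ≤ |n| :=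
  calc 2 * |n / d| ≤ |d| * |n / d| := by gcongr; exact hd.trans (le_abs_self d)
    _ = |n| := by rw [← abs_mul, Int.mul_ediv_cancel' hdn]

theorem two_mul_abs_dpsi_le (hψ : IsDeriv ψ) (n : ℤ) :
    2 * |(dpsi ψ n : ℝ)| ≤ |(n : ℝ)| * dNorm ψ * Ω n.natAbs := by
  have term_le : ∀ p ∈ n.natAbs.primeFactors,
      2 * |((n / p * n.natAbs.factorization p * ψ p : ℤ) : ℝ)| ≤
        |(n : ℝ)| * dNorm ψ * n.natAbs.factorization p := fun p hp => by
    have ediv_le : 2 * |((n / p : ℤ) : ℝ)| ≤ |(n : ℝ)| := mod_cast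
      two_mul_abs_ediv_le (mod_cast (Nat.prime_of_mem_primeFactors hp).two_le)
        (Int.natCast_dvd.mpr (Nat.dvd_of_mem_primeFactors hp))
    rw [Int.cast_mul, Int.cast_mul, Int.cast_natCast, abs_mul, abs_mul, Nat.abs_cast]
    calc 2 * (|((n / p : ℤ) : ℝ)| * n.natAbs.factorization p * |(ψ p : ℝ)|)
        = 2 * |((n / p : ℤ) : ℝ)| * |(ψ p : ℝ)| * n.natAbs.factorization p := by ring
      _ ≤ |(n : ℝ)| * dNorm ψ * n.natAbs.factorization p := by
        gcongr
        exact abs_le_dNorm hψ p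
  calc 2 * |(dpsi ψ n : ℝ)|
      ≤ ∑ p ∈ n.natAbs.primeFactors,
          2 * |((n / p * n.natAbs.factorization p * ψ p : ℤ) : ℝ)| := by
        rw [dpsi, Int.cast_sum, ← mul_sum]
        gcongr
        exact abs_sum_le_sum_abs _ _
    _ ≤ ∑ p ∈ n.natAbs.primeFactors, |(n : ℝ)| * dNorm ψ * n.natAbs.factorization p :=
        sum_le_sum term_le
    _ = |(n : ℝ)| * dNorm ψ * Ω n.natAbs := by
        rw [← mul_sum, ArithmeticFunction.cardFactors_eq_sum_factorization, Finsupp.sum,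
          Nat.support_factorization, Nat.cast_sum]

theorem two_mul_abs_Wpsi_le (hψ : IsDeriv ψ) (m n : ℤ) :
    2 * |(Wpsi ψ m n : ℝ)| ≤ |(m : ℝ)| * |(n : ℝ)| * dNorm ψ * (Ω m.natAbs + Ω n.natAbs) :=
  calc 2 * |(Wpsi ψ m n : ℝ)|
      ≤ 2 * (|(m : ℝ) * dpsi ψ n| + |(n : ℝ) * dpsi ψ m|) := by
        rw [Wpsi]
        push_cast
        gcongr
        exact abs_sub _ _
    _ = |(m : ℝ)| * (2 * |(dpsi ψ n : ℝ)|) + |(n : ℝ)| * (2 * |(dpsi ψ m : ℝ)|) := by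
        rw [abs_mul, abs_mul]; ring
    _ ≤ |(m : ℝ)| * (|(n : ℝ)| * dNorm ψ * Ω n.natAbs) +
          |(n : ℝ)| * (|(m : ℝ)| * dNorm ψ * Ω m.natAbs) := by
        gcongr ?_ * ?_ + ?_ * ?_ <;> exact two_mul_abs_dpsi_le hψ _
    _ = |(m : ℝ)| * |(n : ℝ)| * dNorm ψ * (Ω m.natAbs + Ω n.natAbs) := by ring

theorem two_mul_add_le_radN_mul_dNorm_mul_cardFactors {a b : ℕ} (ha : 0 < a) (hb : 0 < b)
    (hab : a.Coprime b) (hψ : IsDeriv ψ)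
    (hadd : dpsi ψ ((a : ℤ) + b) = dpsi ψ a + dpsi ψ b) (hind : Wpsi ψ a b ≠ 0) :
    2 * ((a + b : ℕ) : ℝ) ≤ radN (a * b * (a + b)) * dNorm ψ * Ω (a * b) := by
  set R := radN (a * b * (a + b))
  have R_mul_W_ne_zero : (R : ℤ) * Wpsi ψ a b ≠ 0 :=
    mul_ne_zero (mod_cast (radN_pos _).ne') hind
  have abc_le : a * b * ((a + b : ℕ) : ℝ) ≤ R * |(Wpsi ψ a b : ℝ)| := by
    have h := Int.le_of_dvd (abs_pos.mpr R_mul_W_ne_zero)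
      ((dvd_abs _ _).mpr (mul_mul_add_dvd_radN_mul_Wpsi ha hb hab hadd))
    rw [abs_mul, Nat.abs_cast] at h
    exact mod_cast h
  have W_le : 2 * |(Wpsi ψ a b : ℝ)| ≤ a * b * dNorm ψ * Ω (a * b) := by
    rw [ArithmeticFunction.cardFactors_mul ha.ne' hb.ne', Nat.cast_add]
    simpa only [Int.cast_natCast, Nat.abs_cast, Int.natAbs_natCast] using
      two_mul_abs_Wpsi_le hψ a b
  refine le_of_mul_le_mul_left ?_ (by positivity : (0 : ℝ) < a * b)
  calc (a * b : ℝ) * (2 * ((a + b : ℕ) : ℝ)) = 2 * (a * b * ((a + b : ℕ) : ℝ)) := by ring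
    _ ≤ 2 * (R * |(Wpsi ψ a b : ℝ)|) := by gcongr
    _ = R * (2 * |(Wpsi ψ a b : ℝ)|) := by ring
    _ ≤ R * (a * b * dNorm ψ * Ω (a * b)) := by gcongr
    _ = a * b * (R * dNorm ψ * Ω (a * b)) := by ring

theorem cardFactors_mul_mul_log_two_le {a b : ℕ} (ha : 0 < a) (hb : 0 < b) :
    Ω (a * b) * Real.log 2 ≤ 2 * Real.log ((a + b : ℕ) : ℝ) := by
  have mul_le_sq : a * b ≤ (a + b) ^ 2 := by nlinarith
  calc Ω (a * b) * Real.log 2 ≤ Real.log ((a * b : ℕ) : ℝ) :=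
        cardFactors_mul_log_two_le (by positivity)
    _ ≤ Real.log (((a + b) ^ 2 : ℕ) : ℝ) :=
        Real.log_le_log (by positivity) (mod_cast mul_le_sq)
    _ = 2 * Real.log ((a + b : ℕ) : ℝ) := by rw [Nat.cast_pow, Real.log_pow, Nat.cast_ofNat]

theorem abc_estimate_general {a b : ℕ} (ha : 0 < a) (hb : 0 < b) (hab : a.Coprime b)
    (hψ : IsDeriv ψ) (hadd : dpsi ψ ((a : ℤ) + b) = dpsi ψ a + dpsi ψ b)
    (hind : Wpsi ψ a b ≠ 0) :
    ((a + b : ℕ) : ℝ) / Real.log ((a + b : ℕ) : ℝ) ≤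
      radN (a * b * (a + b)) * dNorm ψ / Real.log 2 := by
  set c := a + b
  set R := radN (a * b * c)
  have log_c_pos : 0 < Real.log (c : ℝ) := Real.log_pos (by norm_cast; omega)
  have log_two_pos : 0 < Real.log 2 := Real.log_pos one_lt_two
  have RN_nonneg : 0 ≤ R * dNorm ψ := mul_nonneg R.cast_nonneg (dNorm_nonneg ψ)
  have two_mul_le : 2 * (c * Real.log 2) ≤ 2 * (R * dNorm ψ * Real.log c) :=
    calc 2 * (c * Real.log 2) = 2 * c * Real.log 2 := by ring
      _ ≤ R * dNorm ψ * Ω (a * b) * Real.log 2 := by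
        gcongr ?_ * _
        exact two_mul_add_le_radN_mul_dNorm_mul_cardFactors ha hb hab hψ hadd hind
      _ = R * dNorm ψ * (Ω (a * b) * Real.log 2) := by ring
      _ ≤ R * dNorm ψ * (2 * Real.log c) := by
        gcongr ?_ * ?_
        exact cardFactors_mul_mul_log_two_le ha hb
      _ = 2 * (R * dNorm ψ * Real.log c) := by ring
  rw [div_le_div_iff₀ log_c_pos log_two_pos]
  linarith

end

/-- An abc estimate via arithmetic derivatives. -/
theorem abc_estimate (a b : ℕ) (ha : 0 < a) (hb : 0 < b) (hab : Nat.Coprime a b)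
    (hne : ¬ (a = 1 ∧ b = 1)) (ψ : ℕ → ℤ) (hψ : MemT a b ψ)
    (hind : Wpsi ψ (a : ℤ) (b : ℤ) ≠ 0) :
    ((a + b : ℕ) : ℝ) / Real.log ((a + b : ℕ) : ℝ) ≤
      (radN (a * b * (a + b)) : ℝ) * dNorm ψ / Real.log 2 :=
  abc_estimate_general ha hb hab hψ.1 hψ.2.2 hind
end

section
/- For every positive integer n and every derivation ψ, the integer n divides gcd(n, d^ψ(n)) · rad(n). -/
open Finset

/-!
Each prime `p ∣ n` divides `rad n`, so `n / rad n` divides `n / p` and hence every summand of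
`d^ψ(n)`. Being a divisor of `n` as well, `n / rad n` divides `gcd(n, d^ψ(n))`; multiply by `rad n`.
-/

theorem div_dvd_div_left_of_dvd {R : Type*} [EuclideanDomain R] {a b c : R}
    (hba : b ∣ a) (hcb : c ∣ b) : a / b ∣ a / c := by
  obtain rfl | hb := eq_or_ne b 0
  · simp [zero_dvd_iff.mp hba]
  · refine EuclideanDomain.dvd_div_of_mul_dvd ?_
    calc
      c * (a / b) ∣ b * (a / b) := mul_dvd_mul_right hcb _
      _ = a := EuclideanDomain.mul_div_cancel' hb hba

theorem radN_natAbs_dvd (n : ℤ) : (radN n.natAbs : ℤ) ∣ n :=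
  Int.natCast_dvd.mpr (Nat.prod_primeFactors_dvd n.natAbs)

theorem dvd_radN {n p : ℕ} (hp : p ∈ n.primeFactors) : p ∣ radN n :=
  dvd_prod_of_mem id hp

theorem ediv_radN_dvd_ediv {n : ℤ} {p : ℕ} (hp : p ∈ n.natAbs.primeFactors) :
    n / radN n.natAbs ∣ n / p :=
  div_dvd_div_left_of_dvd (radN_natAbs_dvd n) (Int.natCast_dvd_natCast.mpr (dvd_radN hp))

theorem ediv_radN_dvd_dpsi (ψ : ℕ → ℤ) (n : ℤ) : n / radN n.natAbs ∣ dpsi ψ n :=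
  dvd_sum fun _ hp ↦ ((ediv_radN_dvd_ediv hp).mul_right _).mul_right _

theorem dvd_gcd_mul_radical_general (n : ℤ) (ψ : ℕ → ℤ) :
    n ∣ (Int.gcd n (dpsi ψ n) : ℤ) * (radN n.natAbs : ℤ) := by
  have hrad : (radN n.natAbs : ℤ) ∣ n := radN_natAbs_dvd n
  have hgcd : n / radN n.natAbs ∣ (Int.gcd n (dpsi ψ n) : ℤ) :=
    Int.dvd_coe_gcd (Int.ediv_dvd_of_dvd hrad) (ediv_radN_dvd_dpsi ψ n)
  calc
    n = n / radN n.natAbs * radN n.natAbs := (Int.ediv_mul_cancel hrad).symm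
    _ ∣ (Int.gcd n (dpsi ψ n) : ℤ) * (radN n.natAbs : ℤ) := mul_dvd_mul_right hgcd _

/-- `n` divides `gcd(n, d^ψ(n)) · rad(n)`. -/
theorem dvd_gcd_mul_radical (n : ℕ) (hn : 0 < n) (ψ : ℕ → ℤ) (hψ : IsDeriv ψ) :
    (n : ℤ) ∣ (Int.gcd (n : ℤ) (dpsi ψ (n : ℤ)) : ℤ) * (radN n : ℤ) :=
  dvd_gcd_mul_radical_general n ψ
end

section
/- Up to permutation of a, b, c, the only triples of pairwise coprime positive integers a, b, c with a + b = c and ω(abc) ≤ 2 are: (1,1,2), (1,8,9), and (1, 2ⁿ, q) with q prime and n ≥ 1 (where either 2ⁿ + 1 = q or q + 1 = 2ⁿ, i.e. the triple is {1, 2ⁿ, q} with the largest element equal to the sum of the other two). -/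
open Finset

/-!
Three pairwise coprime integers greater than `1` have at least three prime factors between them, so
`a = 1` or `b = 1`, and unless the triple is `{1, 1, 2}` the other two entries are consecutive prime
powers. One of these is a power of `2`, so it remains to solve `x ^ m - y = 2 ^ n` with `y = ±1`.
This case of Mihăilescu's theorem is elementary. For odd `m`, the cofactor of `x - y` in
`x ^ m - y ^ m = 2 ^ n` is odd, hence a unit, so `x ^ m = x`. For even `m`, `x ^ m + 1` is not
divisible by `4`, and `x ^ m - 1` is a product of two numbers differing by `2`, which are both
powers of `2` only if they are `2` and `4`.
-/

theorem associated_pow_sub_pow_of_dvd_prime_pow {R : Type*} [CommRing R] [IsDomain R]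
    {p x y : R} {m k : ℕ} (hp : Prime p) (hxy : p ∣ x - y) (hx : ¬p ∣ x) (hm : ¬p ∣ (m : R))
    (h : x ^ m - y ^ m ∣ p ^ k) : Associated (x ^ m - y ^ m) (x - y) := by
  rw [← geom_sum₂_mul] at h ⊢
  obtain ⟨i, -, hi⟩ := (dvd_prime_pow hp k).1 (dvd_of_mul_right_dvd h)
  have hi0 : i = 0 := by
    by_contra hi0
    exact not_dvd_geom_sum₂ hp hxy hx hm ((dvd_pow_self p hi0).trans hi.symm.dvd)
  have hunit : IsUnit (∑ j ∈ range m, x ^ j * y ^ (m - 1 - j)) := by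
    rwa [hi0, pow_zero, associated_one_iff_isUnit] at hi
  exact associated_unit_mul_left _ _ hunit

theorem abs_pow_sub_pow_eq_of_dvd_two_pow {x y : ℤ} {m k : ℕ} (hx : Odd x) (hy : Odd y)
    (hm : Odd m) (h : x ^ m - y ^ m ∣ 2 ^ k) : |x ^ m - y ^ m| = |x - y| :=
  abs_eq_abs.2 <| Int.associated_iff.1 <|
    associated_pow_sub_pow_of_dvd_prime_pow Int.prime_two (hx.sub_odd hy).two_dvd
      (by rwa [← even_iff_two_dvd, Int.not_even_iff_odd]) (by exact_mod_cast hm.not_two_dvd_nat) h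

section NearPowersOfTwo

variable {i j m n s x : ℕ}

theorem eq_one_and_eq_two_of_two_pow_add_two_eq_two_pow (h : 2 ^ i + 2 = 2 ^ j) :
    i = 1 ∧ j = 2 := by
  have hj : 1 < j := by
    have hi0 := Nat.two_pow_pos i
    exact (Nat.pow_lt_pow_iff_right one_lt_two).1 (by lia)
  have h4 : 4 ∣ 2 ^ i + 2 := h ▸ pow_dvd_pow 2 hj
  obtain rfl : i = 1 := by
    rcases i with _ | _ | i <;> lia
  exact ⟨rfl, Nat.pow_right_injective le_rfl h.symm⟩

theorem eq_three_of_sq_eq_two_pow_add_one (h : s ^ 2 = 2 ^ n + 1) : s = 3 ∧ n = 3 := by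
  have hs : 1 < s := by
    have := Nat.two_pow_pos n
    by_contra!
    interval_cases s <;> omega
  obtain ⟨r, rfl⟩ : ∃ r, s = r + 1 := ⟨s - 1, by omega⟩
  have hfactor : 2 ^ n = r * (r + 2) := by linarith
  obtain ⟨i, -, rfl⟩ := (Nat.dvd_prime_pow Nat.prime_two).1 (Dvd.intro _ hfactor.symm)
  obtain ⟨j, -, hj⟩ := (Nat.dvd_prime_pow Nat.prime_two).1 (Dvd.intro_left _ hfactor.symm)
  obtain ⟨rfl, rfl⟩ := eq_one_and_eq_two_of_two_pow_add_two_eq_two_pow hj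
  exact ⟨rfl, Nat.pow_right_injective le_rfl hfactor⟩

theorem le_one_of_sq_add_one_eq_two_pow (h : s ^ 2 + 1 = 2 ^ n) : s ≤ 1 := by
  have hn : n < 2 := by
    by_contra! hn
    have h4 : 4 ∣ s ^ 2 + 1 := h ▸ pow_dvd_pow 2 hn
    have hmod : s % 4 < 4 := Nat.mod_lt _ four_pos
    rw [Nat.dvd_iff_mod_eq_zero, Nat.add_mod, Nat.pow_mod] at h4
    interval_cases s % 4 <;> simp at h4
  by_contra! hs
  nlinarith [Nat.pow_lt_pow_right one_lt_two hn]

theorem eq_one_of_pow_add_one_eq_two_pow (hx : 1 < x) (hm : m ≠ 0) (h : x ^ m + 1 = 2 ^ n) :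
    m = 1 := by
  have hxm : 1 < x ^ m := Nat.one_lt_pow hm hx
  rcases m.even_or_odd' with ⟨k, rfl | rfl⟩
  · rw [mul_comm, pow_mul] at h hxm
    exact absurd (le_one_of_sq_add_one_eq_two_pow h) ((Nat.one_lt_pow_iff two_ne_zero).1 hxm).not_ge
  · have hn : n ≠ 0 := by
      rintro rfl
      omega
    have hxo : Odd x := by
      have heven : Even (x ^ (2 * k + 1) + 1) := h ▸ even_two.pow_of_ne_zero hn
      exact (Nat.odd_pow_iff hm).1 (by simpa [Nat.even_add_one] using heven)
    have hmo : Odd (2 * k + 1) := odd_two_mul_add_one k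
    have hz : (x : ℤ) ^ (2 * k + 1) - (-1) ^ (2 * k + 1) = 2 ^ n := by
      rw [hmo.neg_one_pow, sub_neg_eq_add]
      exact_mod_cast h
    have habs := abs_pow_sub_pow_eq_of_dvd_two_pow (by exact_mod_cast hxo) odd_neg_one hmo hz.dvd
    rw [hmo.neg_one_pow, sub_neg_eq_add, sub_neg_eq_add, abs_of_pos (by positivity),
      abs_of_pos (by positivity), add_left_inj] at habs
    exact (Nat.pow_eq_self_iff hx).1 (by exact_mod_cast habs)

theorem eq_one_or_eq_three_of_pow_eq_two_pow_add_one (h : x ^ m = 2 ^ n + 1) :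
    m = 1 ∨ x = 3 ∧ m = 2 ∧ n = 3 := by
  rcases m.even_or_odd' with ⟨k, rfl | rfl⟩
  · right
    rw [mul_comm, pow_mul] at h
    obtain ⟨hxk, rfl⟩ := eq_three_of_sq_eq_two_pow_add_one h
    obtain ⟨rfl, rfl⟩ := Nat.prime_three.pow_eq_iff.1 hxk
    exact ⟨rfl, rfl, rfl⟩
  · left
    rcases eq_or_ne n 0 with rfl | hn
    · exact (Nat.prime_two.pow_eq_iff.1 h).2
    have hmo : Odd (2 * k + 1) := odd_two_mul_add_one k
    have hxo : Odd x := by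
      rw [← Nat.odd_pow_iff hmo.pos.ne', h]
      exact (even_two.pow_of_ne_zero hn).add_one
    have hx : 1 < x := by
      by_contra! hx1
      have := Nat.pow_le_one_iff hmo.pos.ne' |>.2 hx1
      have := Nat.two_pow_pos n
      omega
    have hz : (x : ℤ) ^ (2 * k + 1) - 1 ^ (2 * k + 1) = 2 ^ n := by
      rw [one_pow, sub_eq_iff_eq_add]
      exact_mod_cast h
    have habs := abs_pow_sub_pow_eq_of_dvd_two_pow (by exact_mod_cast hxo) odd_one hmo hz.dvd
    rw [hz, abs_of_pos (by positivity), abs_of_pos (by lia), ← hz, one_pow, sub_left_inj] at habs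
    exact (Nat.pow_eq_self_iff hx).1 (by exact_mod_cast habs)

end NearPowersOfTwo

theorem eq_eight_or_prime_of_isPrimePow_of_isPrimePow_add_one {b : ℕ} (hb : IsPrimePow b)
    (hb' : IsPrimePow (b + 1)) :
    b = 8 ∨ ∃ n, n ≠ 0 ∧ (b = 2 ^ n ∧ (b + 1).Prime ∨ b.Prime ∧ b + 1 = 2 ^ n) := by
  obtain ⟨p, k, hp, hk, hpk⟩ := (isPrimePow_nat_iff b).1 hb
  obtain ⟨q, m, hq, hm, hqm⟩ := (isPrimePow_nat_iff (b + 1)).1 hb'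
  rcases b.even_or_odd with heven | hodd
  · obtain rfl : p = 2 := hp.even_iff.1 (Nat.even_pow.1 (hpk ▸ heven)).1
    rcases eq_one_or_eq_three_of_pow_eq_two_pow_add_one (hpk ▸ hqm) with rfl | ⟨-, -, rfl⟩
    · exact .inr ⟨k, hk.ne', .inl ⟨hpk.symm, by rwa [← hqm, pow_one]⟩⟩
    · exact .inl hpk.symm
  · obtain rfl : q = 2 := hq.even_iff.1 (Nat.even_pow.1 (hqm ▸ hodd.add_one)).1
    obtain rfl := eq_one_of_pow_add_one_eq_two_pow hp.one_lt hk.ne' (hpk ▸ hqm.symm)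
    exact .inr ⟨m, hm.ne', .inr ⟨by rwa [← hpk, pow_one], hqm.symm⟩⟩

section DistinctPrimeFactors

open ArithmeticFunction ArithmeticFunction.omega

variable {a b c : ℕ}

theorem card_primeFactors_eq_cardDistinctFactors (n : ℕ) : n.primeFactors.card = ω n :=
  rfl

theorem isPrimePow_and_isPrimePow_of_cardDistinctFactors_mul_le_two (hb : 1 < b) (hc : 1 < c)
    (hbc : b.Coprime c) (h : ω (b * c) ≤ 2) : IsPrimePow b ∧ IsPrimePow c := by
  rw [cardDistinctFactors_mul hbc] at h
  have hωb := cardDistinctFactors_pos.2 hb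
  have hωc := cardDistinctFactors_pos.2 hc
  exact ⟨cardDistinctFactors_eq_one_iff.1 (by lia), cardDistinctFactors_eq_one_iff.1 (by lia)⟩

theorem two_lt_cardDistinctFactors_mul_mul (ha : 1 < a) (hb : 1 < b) (hc : 1 < c)
    (hab : a.Coprime b) (hac : a.Coprime c) (hbc : b.Coprime c) : 2 < ω (a * b * c) := by
  rw [cardDistinctFactors_mul (hac.mul_left hbc), cardDistinctFactors_mul hab]
  have hωa := cardDistinctFactors_pos.2 ha
  have hωb := cardDistinctFactors_pos.2 hb
  have hωc := cardDistinctFactors_pos.2 hc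
  lia

end DistinctPrimeFactors

/-- Classification of coprime triples `a + b = c` with `ω(abc) ≤ 2`, up to order. -/
theorem omega_le_two_classification (a b c : ℕ) (ha : 0 < a) (hb : 0 < b) (hc : 0 < c)
    (h1 : Nat.Coprime a b) (h2 : Nat.Coprime a c) (h3 : Nat.Coprime b c)
    (habc : a + b = c) (hω : (a * b * c).primeFactors.card ≤ 2) :
    ({a, b, c} : Multiset ℕ) = {1, 1, 2} ∨ ({a, b, c} : Multiset ℕ) = {1, 8, 9} ∨
    ∃ n q : ℕ, 1 ≤ n ∧ q.Prime ∧ ({a, b, c} : Multiset ℕ) = {1, 2 ^ n, q} := by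
  wlog hab : a ≤ b generalizing a b
  · rw [show ({a, b, c} : Multiset ℕ) = {b, a, c} from Multiset.cons_swap a b {c}]
    exact this b a hb ha h1.symm h3 h2 (by lia) (by rwa [mul_comm b a]) (by lia)
  rw [card_primeFactors_eq_cardDistinctFactors] at hω
  obtain rfl : a = 1 := by
    by_contra ha1
    exact hω.not_gt (two_lt_cardDistinctFactors_mul_mul (by lia) (by lia) (by lia) h1 h2 h3)
  obtain rfl : c = b + 1 := by lia
  rcases hab.eq_or_lt with rfl | hb1
  · exact .inl rfl
  rw [one_mul] at hω
  obtain ⟨hpb, hpc⟩ :=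
    isPrimePow_and_isPrimePow_of_cardDistinctFactors_mul_le_two hb1 (by lia) h3 hω
  rcases eq_eight_or_prime_of_isPrimePow_of_isPrimePow_add_one hpb hpc with
    rfl | ⟨n, hn, ⟨rfl, hq⟩ | ⟨hq, hbn⟩⟩
  · exact .inr (.inl rfl)
  · exact .inr (.inr ⟨n, 2 ^ n + 1, Nat.one_le_iff_ne_zero.2 hn, hq, rfl⟩)
  · refine .inr (.inr ⟨n, b, Nat.one_le_iff_ne_zero.2 hn, hq, ?_⟩)
    rw [hbn, Multiset.pair_comm b]
end
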